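/- Let m and p be positive integers, set l = 4mp−1, t = 4mp−2p−1 and p' = 2mp−1, let N be a positive integer, and let q be a nonzero complex number with (q;q)_{N−1} ≠ 0. Then, with a(n), b₁(n), b₂(n), X(n) as defined in the context (all exponents of q occurring are integers), Σ_{N−1 ≥ n_{p'} ≥ ⋯ ≥ n_1 ≥ 0} q^{a(n)N + b₁(n) + b₂(n)} X(n) = q^{1−N} Σ_{N−1 ≥ n_{2mp−1} ≥ ⋯ ≥ n_1 ≥ 0} (q^{1−N};q)_{n_{2mp−1}} (−1)^{n_{2mp−1}} q^{−n_{2mp−1}(n_{2mp−1}+1)/2} · ∏_{1 ≤ i < j ≤ 2mp−1, m ∤ i} q^{ε_{i,j,m} n_i n_j} · ∏_{i=1}^{2p−1} (−1)^{n_{mi}} q^{(−1)^i N n_{mi} + n_{mi}(n_{mi}+1)/2} · ∏_{i=1}^{2mp−2} q^{−n_i n_{i+1} + γ_{i,m} n_i} [n_{i+1}; n_i]_q. -/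

import Mathlib

open Finset

noncomputable section

/-- The q-Pochhammer symbol `(a; q)_n = ∏_{k=0}^{n-1} (1 - a q^k)`. -/
def qPoch (a q : ℂ) (n : ℕ) : ℂ := ∏ k ∈ Finset.range n, (1 - a * q ^ k)

/-- The Gaussian binomial coefficient `[n; k]_q` as a polynomial in `q` over `ℤ`,
defined by the q-Pascal rule `[n; k] = [n-1; k-1] + q^k [n-1; k]`.  It is the
polynomial equal to `(q;q)_n / ((q;q)_{n-k} (q;q)_k)`. -/
def gaussPoly : ℕ → ℕ → Polynomial ℤ
  | _, 0 => 1
  | 0, _ + 1 => 0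
  | n + 1, k + 1 => gaussPoly n k + Polynomial.X ^ (k + 1) * gaussPoly n (k + 1)

/-- The Gaussian binomial coefficient `[n; k]_q` evaluated at `q : ℂ`. -/
def gbin (q : ℂ) (n k : ℕ) : ℂ := Polynomial.aeval q (gaussPoly n k)

/-- `σ_j = (-1)^⌊(2j-1)t/l⌋`. -/
def sigmaT (l t j : ℕ) : ℤ := (-1) ^ ((2 * j - 1) * t / l)

/-- `r(j)`: the unique integer with `r(j) ≡ (2j-1)t (mod 2l)` and `-l < r(j) < l`. -/
def rT (l t j : ℕ) : ℤ :=
  if (((2 * j - 1) * t % (2 * l) : ℕ) : ℤ) < (l : ℤ) then (((2 * j - 1) * t % (2 * l) : ℕ) : ℤ)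
  else (((2 * j - 1) * t % (2 * l) : ℕ) : ℤ) - 2 * (l : ℤ)

/-- `r'(j) = (|r(j)| + 1)/2`. -/
def rpT (l t j : ℕ) : ℕ := ((rT l t j).natAbs + 1) / 2

open Classical in
/-- `i_k`: the unique `j ∈ {1, …, (l-1)/2}` with `r'(j) = k`. -/
def iT (l t k : ℕ) : ℕ :=
  if h : ∃ j, j ∈ Finset.Icc 1 ((l - 1) / 2) ∧ rpT l t j = k then h.choose else 0

/-- `ε_{i,j,m}`: `1` if `j ≡ -i, -i-1 (mod 2m)`, `-1` if `j ≡ i, i-1 (mod 2m)`,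
`0` otherwise (and `0` when `m ∣ i`, a case excluded in all uses). -/
def epsLO (m i j : ℕ) : ℤ :=
  if m ∣ i then 0
  else if 2 * m ∣ (i + j) ∨ 2 * m ∣ (i + j + 1) then 1
  else if (2 * (m : ℤ)) ∣ ((j : ℤ) - (i : ℤ)) ∨ (2 * (m : ℤ)) ∣ ((j : ℤ) - (i : ℤ) + 1) then -1
  else 0

/-- `Δ_{i,j,m}`: `1` if `j ≡ -i, -i+1 (mod 2m)`, `-1` if `j ≡ i, i+1 (mod 2m)`,
`0` otherwise (and `0` when `m ∣ i`, a case excluded in all uses). -/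
def deltaLO (m i j : ℕ) : ℤ :=
  if m ∣ i then 0
  else if 2 * m ∣ (i + j) ∨ 2 * m ∣ (i + j - 1) then 1
  else if (2 * (m : ℤ)) ∣ ((j : ℤ) - (i : ℤ)) ∨ (2 * (m : ℤ)) ∣ ((j : ℤ) - (i : ℤ) - 1) then -1
  else 0

/-- `γ_{i,m} = 1` if `i ≡ 1, …, m-1 (mod 2m)` and `-1` otherwise. -/
def gamLO (m i : ℕ) : ℤ :=
  if 1 ≤ i % (2 * m) ∧ i % (2 * m) ≤ m - 1 then 1 else -1

/-- `β_{i,m} = 1` if `i ≡ 1, …, m-1 (mod 2m)`, `-1` if `i ≡ m+1, …, 2m-1 (mod 2m)`,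
and `0` if `m ∣ i`. -/
def betLO (m i : ℕ) : ℤ :=
  if 1 ≤ i % (2 * m) ∧ i % (2 * m) ≤ m - 1 then 1
  else if m + 1 ≤ i % (2 * m) ∧ i % (2 * m) ≤ 2 * m - 1 then -1
  else 0

/-- Extend a tuple `f : Fin P → Fin N` to `n : ℕ → ℕ` with `n i = f (i-1)` for
`1 ≤ i ≤ P` and `n i = 0` otherwise (in particular `n 0 = 0`). -/
def extTup (P N : ℕ) (f : Fin P → Fin N) : ℕ → ℕ :=
  fun i => if h : 1 ≤ i ∧ i ≤ P then (f ⟨i - 1, by omega⟩ : ℕ) else 0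

/-- Takata's exponent `a(n)` (an integer; every integer division below is exact). -/
def aT (l t : ℕ) (n : ℕ → ℕ) : ℤ :=
  -(∑ j ∈ Icc 1 ((l - 1) / 2), (∑ k ∈ Icc (rpT l t j) ((l - 1) / 2),
      (sigmaT l t (iT l t k) + sigmaT l t (iT l t ((l - 1) / 2 + 1 - k))) / 2) *
      ((n j : ℤ) - (n (j - 1) : ℤ)))
  - ∑ j ∈ Icc 1 ((l - 1) / 2 - 1), ((sigmaT l t (j + 1) + sigmaT l t ((l - 1) / 2 + 1 - j)) / 2) * (n j : ℤ)
  - ((sigmaT l t ((l - 1) / 2) + 1) / 2) * (n ((l - 1) / 2) : ℤ)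
  - ∑ j ∈ Icc 1 ((l - 1) / 2), sigmaT l t j

/-- Takata's exponent `b₁(n)` (an integer; every integer division below is exact
whenever the factor it multiplies is nonzero). -/
def b1T (l t : ℕ) (n : ℕ → ℕ) : ℤ :=
  -aT l t n
  + ∑ k ∈ Icc 1 ((l - t) / 2), ((1 - sigmaT l t (iT l t k)) / 2) * (n (iT l t k - 1) : ℤ)
  - ∑ k ∈ Icc ((l - t) / 2 + 1) ((l - 1) / 2), (n (iT l t k - 1) : ℤ)
  + ∑ k ∈ Icc ((l - t) / 2 + 1) ((l - 1) / 2), ((1 + sigmaT l t (iT l t k)) / 2) * (n (iT l t k) : ℤ)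
  - (1 + sigmaT l t ((l - 1) / 2)) * (n ((l - 1) / 2) : ℤ)
  + ∑ j ∈ Icc 1 ((l - 1) / 2 - 1), ((sigmaT l t (j + 1) - sigmaT l t j) / 2) * (n j : ℤ)
  - ∑ k ∈ Icc 1 ((l - 1) / 2 - 1), ∑ k' ∈ Icc (k + 1) ((l - 1) / 2),
      ((1 + Int.sign ((iT l t k : ℤ) - (iT l t k' : ℤ))) / 2) *
        ((sigmaT l t (iT l t k) - sigmaT l t (iT l t k')) / 2) *
        ((n (iT l t k) : ℤ) - (n (iT l t k - 1) : ℤ)) *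
        ((n (iT l t k') : ℤ) - (n (iT l t k' - 1) : ℤ))
  + ∑ j ∈ Icc 1 ((l - 1) / 2), sigmaT l t j *
      (∑ k ∈ Icc 1 (rpT l t j), ((n (iT l t k) : ℤ) - (n (iT l t k - 1) : ℤ))) * (n (j - 1) : ℤ)

/-- Takata's exponent `b₂(n)`. -/
def b2T (l t : ℕ) (n : ℕ → ℕ) : ℤ :=
  if l < 2 * t then
    ∑ k ∈ Icc ((l - t) / 2 + 1) ((t - 1) / 2),
      ((1 + sigmaT l t (iT l t k)) / 2) * (n (iT l t k - 1) : ℤ)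
  else
    -∑ k ∈ Icc ((t + 1) / 2 + 1) ((l - t) / 2),
      ((1 + sigmaT l t (iT l t k)) / 2) * (n (iT l t k - 1) : ℤ)

/-- Takata's `κ(p')`. -/
def kapT (l t N : ℕ) (n : ℕ → ℕ) : ℤ :=
  if sigmaT l t ((l - 1) / 2) = -1 then -(N : ℤ) * (n ((l - 1) / 2) : ℤ) else 0

/-- Takata's `τ(j)`. -/
def tauT (l t : ℕ) (q : ℂ) (n : ℕ → ℕ) (j : ℕ) : ℂ :=
  if sigmaT l t j = -1 then (-1 : ℂ) ^ (n j - n (j - 1))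
  else q ^ ((((n j : ℤ) - (n (j - 1) : ℤ)) * (((n j : ℤ) - (n (j - 1) : ℤ)) + 1)) / 2)

/-- Takata's `X(n)`. -/
def XT (l t N : ℕ) (q : ℂ) (n : ℕ → ℕ) : ℂ :=
  (-1 : ℂ) ^ (n ((l - 1) / 2)) * q ^ kapT l t N n *
    (qPoch q q (N - 1) * qPoch q q (n ((l - 1) / 2)) / qPoch q q (N - n ((l - 1) / 2) - 1)) *
    ∏ j ∈ Icc 1 ((l - 1) / 2), tauT l t q n j / qPoch q q (n j - n (j - 1))

/-!
Both sides agree term by term. Since `l = 4mp - 1` and `t = l - 2p`, writing `j = m a + c + 1` with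
`0 ≤ c < m` cuts `{1, …, 2mp}` into `2p` blocks of length `m`; on the block `a` the sign `σ` is
constantly `(-1) ^ a` and `r'` is an arithmetic progression, decreasing for `a` even and increasing
for `a` odd. Hence inside each block a condition `r'(i) ≤ r'(j)` is a threshold on the position of
`i`, so the rank sums in `a(n)` and `b₁(n)` telescope. Their quadratic part is a sum over pairs of
blocks, compared with `∑ ε_{i,j,m} n_i n_j` pair by pair; the linear part is compared block by
block with `∑ γ_{i,m} n_i`. The `q`-Pochhammer denominators telescope into Gaussian binomials, and
reversing `(q; q)_{N-1} / (q; q)_{N-n-1}` gives `(q^{1-N}; q)_n`.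

Every sum over `1 ≤ j ≤ 2mp - 1` is completed by the index `2mp` (where `n` vanishes), which makes
the last block as long as the others.
-/

/-! ### Finite sums -/

section Sums

variable {M : Type*} [AddCommMonoid M]

theorem sum_range_mul (F : ℕ → M) (m k : ℕ) :
    ∑ i ∈ range (m * k), F i = ∑ a ∈ range k, ∑ c ∈ range m, F (m * a + c) := by
  induction k with
  | zero => simp
  | succ k ih => rw [Nat.mul_succ, sum_range_add, sum_range_succ, ih]

theorem sum_range_two_mul (F : ℕ → M) (k : ℕ) :
    ∑ a ∈ range (2 * k), F a = ∑ s ∈ range k, (F (2 * s) + F (2 * s + 1)) := by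
  simp only [sum_range_mul, sum_range_succ, sum_range_zero, zero_add, add_zero]

theorem sum_Icc_one (F : ℕ → M) (k : ℕ) :
    ∑ i ∈ Icc 1 k, F i = ∑ i ∈ range k, F (i + 1) := by
  rw [range_eq_Ico, sum_Ico_add' F 0 k 1]; rfl

theorem sum_Icc_one_pred {F : ℕ → M} {k : ℕ} (h0 : F 0 = 0) :
    ∑ i ∈ Icc 1 (k - 1), F i = ∑ i ∈ range k, F i := by
  cases k with
  | zero => simp
  | succ k => rw [Nat.add_sub_cancel, sum_Icc_one, sum_range_succ', h0, add_zero]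

theorem sum_Icc_one_pred_of_last {F : ℕ → M} {k : ℕ} (hk : 0 < k) (hF : F k = 0) :
    ∑ i ∈ Icc 1 (k - 1), F i = ∑ i ∈ Icc 1 k, F i := by
  obtain ⟨k, rfl⟩ := Nat.exists_eq_add_of_lt hk
  rw [zero_add] at hF ⊢
  rw [Nat.add_sub_cancel, sum_Icc_succ_top (by omega), hF, add_zero]

theorem sum_Icc_blocks (F : ℕ → M) (m p : ℕ) :
    ∑ j ∈ Icc 1 (2 * m * p), F j
      = ∑ a ∈ range (2 * p), ∑ c ∈ range m, F (m * a + c + 1) := by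
  rw [mul_comm 2 m, mul_assoc, sum_Icc_one, sum_range_mul]

theorem sum_range_ite_lt (F : ℕ → M) {u k : ℕ} (hu : u ≤ k) :
    ∑ a ∈ range k, (if a < u then F a else 0) = ∑ a ∈ range u, F a := by
  rw [← sum_filter]
  congr 1
  ext a
  simp only [mem_filter, mem_range]
  omega

theorem sum_Icc_succ_pairs (F : ℕ → ℕ → M) (P : ℕ) :
    ∑ k ∈ Icc 1 (P - 1), ∑ k' ∈ Icc (k + 1) P, F k k'
      = ∑ k ∈ Icc 1 P, ∑ k' ∈ Icc 1 P, if k < k' then F k k' else 0 := by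
  have hinner : ∀ k ∈ Icc 1 P, ∑ k' ∈ Icc (k + 1) P, F k k'
      = ∑ k' ∈ Icc 1 P, if k < k' then F k k' else 0 := fun k _ => by
    rw [← sum_filter]
    refine sum_congr ?_ fun _ _ => rfl
    ext k'
    simp only [mem_filter, mem_Icc]
    omega
  rw [← sum_congr rfl hinner]
  refine sum_subset (Icc_subset_Icc_right (Nat.sub_le _ _)) fun k hk hk' => ?_
  rw [mem_Icc] at hk hk'
  rw [Icc_eq_empty (by omega), sum_empty]

theorem sum_range_sq_eq_sum_triangle (F : ℕ → ℕ → M) (k : ℕ) :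
    ∑ a ∈ range k, ∑ b ∈ range k, F a b
      = ∑ b ∈ range k, (F b b + ∑ a ∈ range b, (F a b + F b a)) := by
  induction k with
  | zero => simp
  | succ k ih =>
    simp only [sum_range_succ, sum_add_distrib] at ih ⊢
    rw [ih]
    abel

end Sums

section Telescoping

variable {G : Type*} [AddCommGroup G]

theorem sum_range_ite_lt_sub (f : ℕ → G) {u k : ℕ} (hu : u ≤ k) :
    ∑ c ∈ range k, (if c < u then f (c + 1) - f c else 0) = f u - f 0 := by
  rw [sum_range_ite_lt _ hu, sum_range_sub]

theorem sum_range_ite_le_sub (f : ℕ → G) {u k : ℕ} (hu : u ≤ k) :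
    ∑ c ∈ range k, (if u ≤ c then f (c + 1) - f c else 0) = f k - f u := by
  rw [← sub_sub_sub_cancel_right _ _ (f 0), ← sum_range_ite_lt_sub f hu, ← sum_range_sub f k,
    ← sum_sub_distrib]
  refine sum_congr rfl fun c _ => ?_
  split_ifs <;> first | omega | simp

end Telescoping

theorem sum_mul_add_sum_mul_shift_sub {R : Type*} [CommRing R] (u v : ℕ → R) (M : ℕ) :
    ∑ c ∈ range (M + 1), u c * v c + ∑ c ∈ range (M + 1), v c * u (c + 1)
        - ∑ c ∈ range M, u (c + 1) * (v (c + 1) + v c)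
      = u 0 * v 0 + v M * u (M + 1) := by
  rw [sum_range_succ', sum_range_succ]
  simp only [mul_add, sum_add_distrib, mul_comm (v _)]
  ring

theorem sum_mul_reflect_add_sum_sub {R : Type*} [CommRing R] (u v : ℕ → R) (K : R) (M : ℕ) :
    ∑ c ∈ range (M + 1), u c * v (M - c) + ∑ c ∈ range (M + 1), v c * u (M - c)
        - ∑ c ∈ range (M + 1), (v (c + 1) - v c) * (K - u (M - c))
        - ∑ c ∈ range M, u (c + 1) * (v (M - c) + v (M - 1 - c))
      = u 0 * (v (M + 1) + v M) - (v (M + 1) - v 0) * K := by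
  have hreflect : ∑ c ∈ range (M + 1), v (c + 1) * u (M - c)
      = ∑ c ∈ range (M + 1), u c * v (M - c + 1) := by
    rw [← sum_range_reflect]
    refine sum_congr rfl fun c hc => ?_
    rw [mem_range] at hc
    rw [mul_comm, show M - (M + 1 - 1 - c) = c by omega, Nat.add_sub_cancel]
  have hshift : ∑ c ∈ range M, u (c + 1) * v (M - (c + 1) + 1)
      = ∑ c ∈ range M, u (c + 1) * v (M - c) := sum_congr rfl fun c hc => by
    rw [mem_range] at hc
    rw [show M - (c + 1) + 1 = M - c by omega]
  simp only [mul_sub, sub_mul, mul_add, sum_sub_distrib, sum_add_distrib, hreflect, ← sum_mul]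
  rw [sum_range_succ' (fun c => u c * v (M - c)), sum_range_succ' (fun c => u c * v (M - c + 1)),
    hshift]
  have htel := sum_range_sub v (M + 1)
  rw [sum_sub_distrib] at htel
  simp only [Nat.sub_sub, Nat.sub_zero, Nat.add_comm 1]
  linear_combination -K * htel

theorem sum_mul_sub_add_sum_sub_mul {R : Type*} [CommRing R] (f x : ℕ → R) (k : ℕ) :
    ∑ j ∈ Icc 1 (k + 1), f j * (x j - x (j - 1)) + ∑ j ∈ Icc 1 k, (f (j + 1) - f j) * x j
      = f (k + 1) * x (k + 1) - f 1 * x 0 := by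
  induction k with
  | zero => simp [mul_sub]
  | succ k ih =>
    simp only [sum_Icc_one, Nat.add_sub_cancel, sum_range_succ] at ih ⊢
    linear_combination ih

theorem sum_triangle_sub {R : Type*} [CommRing R] (x : ℕ → R) (m : ℕ) :
    ∑ c ∈ range m, (x (c + 1) - x c) * (x (c + 1) - x c + 1)
      = x m ^ 2 - x 0 ^ 2 + x m - x 0 + 2 * ∑ c ∈ range m, x c ^ 2
        - 2 * ∑ c ∈ range m, x c * x (c + 1) := by
  induction m with
  | zero => simp
  | succ m ih => rw [sum_range_succ, ih, sum_range_succ, sum_range_succ]; ring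

theorem two_mul_triangle (a : ℤ) : 2 * (a * (a + 1) / 2) = a * (a + 1) :=
  Int.mul_ediv_cancel' (Int.even_mul_succ_self a).two_dvd

theorem neg_one_pow_sub_ediv_two (a b : ℕ) :
    (((-1) ^ a - (-1) ^ b) / 2 : ℤ) = (1 + (-1) ^ a) / 2 - (1 + (-1) ^ b) / 2 := by
  rcases neg_one_pow_eq_or ℤ a with ha | ha <;> rcases neg_one_pow_eq_or ℤ b with hb | hb <;>
    norm_num [ha, hb]

theorem mul_add_le_mul_add_iff {K a b u v : ℕ} (hu : u ∈ Icc 1 K) (hv : v ∈ Icc 1 K) :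
    K * a + u ≤ K * b + v ↔ a < b ∨ a = b ∧ u ≤ v := by
  rw [mem_Icc] at hu hv
  rcases lt_trichotomy a b with h | rfl | h
  · have := Nat.mul_le_mul_left K h
    rw [Nat.mul_succ] at this
    omega
  · simp
  · have := Nat.mul_le_mul_left K h
    rw [Nat.mul_succ] at this
    omega

theorem prod_zpow_eq_zpow_sum {α G : Type*} [CommGroupWithZero G] {q : G} (hq : q ≠ 0)
    (s : Finset α) (e : α → ℤ) : ∏ i ∈ s, q ^ e i = q ^ ∑ i ∈ s, e i := by
  induction s using Finset.cons_induction with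
  | empty => simp
  | cons a s ha ih => rw [prod_cons, sum_cons, ih, zpow_add₀ hq]

/-! ### The signs and ranks on a block -/

theorem sigmaT_eq_one_or (l t j : ℕ) : sigmaT l t j = 1 ∨ sigmaT l t j = -1 :=
  neg_one_pow_eq_or ℤ _

theorem sigmaT_of_mul_eq {l t j k r : ℕ} (h : (2 * j - 1) * t = l * k + r) (hr : r < l) :
    sigmaT l t j = (-1) ^ k := by
  rw [sigmaT, h, Nat.mul_add_div (by omega), Nat.div_eq_of_lt hr, add_zero]

theorem rpT_of_mul_eq {l t j k r : ℕ} (h : (2 * j - 1) * t = l * k + r) (hr : r < l) :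
    rpT l t j = if Even k then (r + 1) / 2 else (l - r + 1) / 2 := by
  have hmod : (2 * j - 1) * t % (2 * l) = r + l * (k % 2) := by
    rw [mul_comm 2 l, Nat.mod_mul, h, Nat.mul_add_mod, Nat.mul_add_div (by omega),
      Nat.mod_eq_of_lt hr, Nat.div_eq_of_lt hr, add_zero]
  rw [rpT, rT, hmod]
  rcases Nat.even_or_odd k with hk | hk
  · rw [Nat.even_iff.1 hk, if_pos hk, mul_zero, add_zero, if_pos (by omega), Int.natAbs_natCast]
  · rw [Nat.odd_iff.1 hk, if_neg (Nat.not_even_iff_odd.2 hk), mul_one, if_neg (by omega)]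
    congr 2
    omega

section DoubleTwist

variable {m p : ℕ}

local notation "σ" => sigmaT (4 * m * p - 1) (4 * m * p - 2 * p - 1)
local notation "ρ" => rpT (4 * m * p - 1) (4 * m * p - 2 * p - 1)
local notation "ι" => iT (4 * m * p - 1) (4 * m * p - 2 * p - 1)

/-- Since `t = l - 2p` and `4mp = l + 1`, the block index `a` measures how often `(2j-1)t`
has slipped back by a full period. -/
theorem block_mul_eq {a c : ℕ} (ha : a < 2 * p) (hc : c < m) :
    (2 * (m * a + c + 1) - 1) * (4 * m * p - 2 * p - 1)
      = (4 * m * p - 1) * (2 * (m * a + c) - a) + (4 * m * p - 1 - (a + 4 * p * c + 2 * p)) ∧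
    a + 4 * p * c + 2 * p ≤ 4 * m * p - 1 := by
  have hpm : p * (c + 1) ≤ p * m := Nat.mul_le_mul_left p hc
  have hle : a + 4 * p * c + 2 * p ≤ 4 * m * p - 1 := by
    rw [show 4 * m * p = 4 * (p * m) by ring, show 4 * p * c = 4 * (p * c) by ring]
    rw [mul_add, mul_one] at hpm
    omega
  have ham : a ≤ m * a := Nat.le_mul_of_pos_left a (by omega)
  refine ⟨?_, hle⟩
  zify [hle, show 1 ≤ 2 * (m * a + c + 1) by omega, show 1 ≤ 4 * m * p by omega,
    show 2 * p ≤ 4 * m * p by omega, show 1 ≤ 4 * m * p - 2 * p by omega,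
    show a ≤ 2 * (m * a + c) by omega]
  ring

theorem sigmaT_block {a c : ℕ} (ha : a < 2 * p) (hc : c < m) : σ (m * a + c + 1) = (-1) ^ a := by
  obtain ⟨hdiv, hle⟩ := block_mul_eq ha hc
  have ham : a ≤ m * a := Nat.le_mul_of_pos_left a (by omega)
  rw [sigmaT_of_mul_eq hdiv (by omega)]
  exact neg_one_pow_congr (by rw [Nat.even_sub (by omega)]; simp)

theorem rpT_block {a c : ℕ} (ha : a < 2 * p) (hc : c < m) :
    ρ (m * a + c + 1)
      = if Even a then 2 * p * (m - 1 - c) + (p - a / 2) else 2 * p * c + (p + a / 2 + 1) := by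
  obtain ⟨hdiv, hle⟩ := block_mul_eq ha hc
  have ham : a ≤ m * a := Nat.le_mul_of_pos_left a (by omega)
  have hpar : Even (2 * (m * a + c) - a) ↔ Even a := by rw [Nat.even_sub (by omega)]; simp
  have hcm : p * (m - 1 - c) + p * (c + 1) = m * p := by
    rw [← mul_add, mul_comm m p]; congr 1; omega
  rw [rpT_of_mul_eq hdiv (by omega), mul_assoc 2 p, mul_assoc 2 p]
  rw [mul_add, mul_one] at hcm
  rw [mul_assoc 4 m, mul_assoc 4 p] at hle ⊢
  clear hdiv ham
  simp only [hpar, Nat.even_iff]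
  split_ifs <;> omega

theorem exists_block {j : ℕ} (hj : j ∈ Icc 1 (2 * m * p)) :
    ∃ a < 2 * p, ∃ c < m, j = m * a + c + 1 := by
  obtain ⟨h1, h2⟩ := mem_Icc.1 hj
  have hm : 0 < m := Nat.pos_of_ne_zero (by rintro rfl; omega)
  refine ⟨(j - 1) / m, ?_, (j - 1) % m, Nat.mod_lt _ hm, ?_⟩
  · rw [Nat.div_lt_iff_lt_mul hm, mul_right_comm]; omega
  · rw [Nat.div_add_mod]; omega

theorem pos_of_mem_Icc {j : ℕ} (hj : j ∈ Icc 1 (2 * m * p)) : 0 < m ∧ 0 < p := by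
  have hpos : 0 < 2 * m * p := (mem_Icc.1 hj).1.trans (mem_Icc.1 hj).2
  simpa using hpos

/-- The threshold in block `b` cut out by the rank of the entry at position `c` of block `a`:
on block `b` the inequality `r'(mb+c'+1) ≤ r'(ma+c+1)` reads `rankCut m a b c ≤ c'` if `b` is
even (there `r'` decreases) and `c' < rankCut m a b c` if `b` is odd (there `r'` increases). -/
def rankCut (m a b c : ℕ) : ℕ :=
  if Even (a + b) then c + (if b < a ∨ b = a ∧ Odd a then 1 else 0) else m - 1 - c

theorem rankCut_le {a b c : ℕ} (hc : c < m) : rankCut m a b c ≤ m := by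
  unfold rankCut; split_ifs <;> omega

theorem rpT_block_le_iff {a b c c' : ℕ} (ha : a < 2 * p) (hb : b < 2 * p) (hc : c < m)
    (hc' : c' < m) : ρ (m * b + c' + 1) ≤ ρ (m * a + c + 1) ↔
      if Even b then rankCut m a b c ≤ c' else c' < rankCut m a b c := by
  rw [rpT_block ha hc, rpT_block hb hc', rankCut]
  simp only [Nat.even_iff, Nat.odd_iff]
  split_ifs <;> try omega
  all_goals
    rw [mul_add_le_mul_add_iff (mem_Icc.2 (by omega)) (mem_Icc.2 (by omega))]
    omega

theorem rpT_injOn : Set.InjOn ρ (Icc 1 (2 * m * p) : Finset ℕ) := by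
  intro i hi j hj hij
  obtain ⟨a, ha, c, hc, rfl⟩ := exists_block hi
  obtain ⟨b, hb, c', hc', rfl⟩ := exists_block hj
  have h1 := (rpT_block_le_iff ha hb hc hc').1 hij.ge
  have h2 := (rpT_block_le_iff hb ha hc' hc).1 hij.le
  simp only [rankCut, Nat.even_iff, Nat.odd_iff] at h1 h2
  have : a = b ∧ c = c' := by split_ifs at h1 h2 <;> omega
  rw [this.1, this.2]

theorem rpT_mem {j : ℕ} (hj : j ∈ Icc 1 (2 * m * p)) : ρ j ∈ Icc 1 (2 * m * p) := by
  obtain ⟨a, ha, c, hc, rfl⟩ := exists_block hj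
  rw [mem_Icc, rpT_block ha hc, mul_right_comm 2 m p]
  have h1 : 2 * p * (m - 1 - c) + 2 * p ≤ 2 * p * m := by
    rw [← Nat.mul_succ]; exact Nat.mul_le_mul_left _ (by omega)
  have h2 : 2 * p * c + 2 * p ≤ 2 * p * m := by
    rw [← Nat.mul_succ]; exact Nat.mul_le_mul_left _ (by omega)
  split_ifs <;> omega

theorem last_block (hm : 0 < m) (hp : 0 < p) : m * (2 * p - 1) + (m - 1) + 1 = 2 * m * p := by
  obtain ⟨s, rfl⟩ := Nat.exists_eq_add_of_lt hp
  rw [add_assoc, Nat.sub_add_cancel hm, show 2 * (0 + s + 1) - 1 = 2 * s + 1 by omega]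
  ring

theorem rpT_last (hm : 0 < m) (hp : 0 < p) : ρ (2 * m * p) = 2 * m * p := by
  rw [← last_block hm hp, rpT_block (by omega) (by omega), last_block hm hp,
    if_neg (by rw [Nat.not_even_iff_odd]; exact ⟨p - 1, by omega⟩),
    show p + (2 * p - 1) / 2 + 1 = 2 * p by omega, ← Nat.mul_succ, Nat.succ_eq_add_one,
    Nat.sub_add_cancel hm, mul_right_comm]

theorem sigmaT_last (hm : 0 < m) (hp : 0 < p) : σ (2 * m * p) = -1 := by
  rw [← last_block hm hp, sigmaT_block (by omega) (by omega), Odd.neg_one_pow ⟨p - 1, by omega⟩]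

theorem half_length (m p : ℕ) : (4 * m * p - 1 - 1) / 2 = 2 * m * p - 1 := by
  rw [mul_assoc, mul_assoc]; omega

theorem two_le_length (hm : 0 < m) (hp : 0 < p) : 2 ≤ 2 * m * p := by
  rw [mul_assoc]; exact Nat.le_mul_of_pos_right 2 (by positivity)

theorem rpT_mem_pred {j : ℕ} (hj : j ∈ Icc 1 (2 * m * p - 1)) : ρ j ∈ Icc 1 (2 * m * p - 1) := by
  have hj' := Icc_subset_Icc_right (Nat.sub_le _ _) hj
  obtain ⟨hm, hp⟩ := pos_of_mem_Icc hj'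
  have hne : ρ j ≠ 2 * m * p := fun h => by
    have := rpT_injOn hj' (right_mem_Icc.2 (Nat.mul_pos (by omega) hp))
      (h.trans (rpT_last hm hp).symm)
    rw [mem_Icc] at hj
    omega
  have := rpT_mem hj'
  rw [mem_Icc] at this ⊢
  omega

theorem rpT_injOn_pred : Set.InjOn ρ (Icc 1 (2 * m * p - 1) : Finset ℕ) :=
  rpT_injOn.mono (coe_subset.2 (Icc_subset_Icc_right (Nat.sub_le _ _)))

theorem iT_spec {k : ℕ} (hk : k ∈ Icc 1 (2 * m * p - 1)) :
    ι k ∈ Icc 1 (2 * m * p - 1) ∧ ρ (ι k) = k := by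
  have hex : ∃ j, j ∈ Icc 1 ((4 * m * p - 1 - 1) / 2) ∧ ρ j = k := by
    rw [half_length]
    exact surjOn_of_injOn_of_card_le ρ (fun _ => rpT_mem_pred) rpT_injOn_pred le_rfl hk
  rw [iT, dif_pos hex, ← half_length]
  exact hex.choose_spec

theorem iT_rpT {j : ℕ} (hj : j ∈ Icc 1 (2 * m * p - 1)) : ι (ρ j) = j :=
  have h := iT_spec (rpT_mem_pred hj)
  rpT_injOn_pred h.1 hj h.2

theorem sum_iT {M : Type*} [AddCommMonoid M] (G : ℕ → ℕ → M) :
    ∑ k ∈ Icc 1 (2 * m * p - 1), G k (ι k) = ∑ j ∈ Icc 1 (2 * m * p - 1), G (ρ j) j :=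
  sum_bij' (fun k _ => ι k) (fun j _ => ρ j) (fun _ hk => (iT_spec hk).1)
    (fun _ => rpT_mem_pred) (fun _ hk => (iT_spec hk).2) (fun _ => iT_rpT)
    fun _ hk => by rw [(iT_spec hk).2]

theorem sigmaT_eq_pow_rpT_div {j : ℕ} (hj : j ∈ Icc 1 (2 * m * p)) :
    σ j = (-1) ^ ((ρ j - 1) / p) := by
  obtain ⟨a, ha, c, hc, rfl⟩ := exists_block hj
  have hp : 0 < p := by omega
  rw [sigmaT_block ha hc, rpT_block ha hc, mul_comm 2 p]
  split_ifs with h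
  · rw [Nat.add_sub_assoc (by omega), mul_assoc, Nat.mul_add_div hp,
      Nat.div_eq_of_lt (b := p) (by omega)]
    exact neg_one_pow_congr (by simp [h])
  · rw [show p * 2 * c + (p + a / 2 + 1) - 1 = p * (2 * c + 1) + a / 2 by
      rw [mul_assoc, mul_add, mul_one]; omega, Nat.mul_add_div hp,
      Nat.div_eq_of_lt (b := p) (by omega)]
    exact neg_one_pow_congr (by simp [h])

theorem sigmaT_iT {k : ℕ} (hk : k ∈ Icc 1 (2 * m * p - 1)) : σ (ι k) = (-1) ^ ((k - 1) / p) := by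
  obtain ⟨h1, h2⟩ := iT_spec hk
  rw [sigmaT_eq_pow_rpT_div (Icc_subset_Icc_right (Nat.sub_le _ _) h1), h2]

/-! ### The quadratic part of the exponent -/

theorem sum_block_rpT_le (x : ℕ → ℤ) {a b c : ℕ} (ha : a < 2 * p) (hb : b < 2 * p) (hc : c < m) :
    ∑ c' ∈ range m, (if ρ (m * b + c' + 1) ≤ ρ (m * a + c + 1)
        then x (m * b + c' + 1) - x (m * b + c' + 1 - 1) else 0)
      = (if Even b then x (m * (b + 1)) else -x (m * b))
        - (-1) ^ b * x (m * b + rankCut m a b c) := by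
  rw [sum_congr rfl fun c' hc' => if_congr
    (rpT_block_le_iff ha hb hc (mem_range.1 hc')) rfl rfl]
  split_ifs with hb2
  · rw [hb2.neg_one_pow, one_mul, mul_add_one]
    exact sum_range_ite_le_sub (fun c' => x (m * b + c')) (rankCut_le hc)
  · rw [(Nat.not_even_iff_odd.1 hb2).neg_one_pow, neg_one_mul, sub_neg_eq_add, neg_add_eq_sub]
    exact sum_range_ite_lt_sub (fun c' => x (m * b + c')) (rankCut_le hc)

theorem sum_rpT_le (x : ℕ → ℤ) {a c : ℕ} (ha : a < 2 * p) (hc : c < m) :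
    ∑ i ∈ Icc 1 (2 * m * p), (if ρ i ≤ ρ (m * a + c + 1) then x i - x (i - 1) else 0)
      = -∑ b ∈ range (2 * p), (-1) ^ b * x (m * b + rankCut m a b c) := by
  rw [sum_Icc_blocks, sum_congr rfl fun b hb => sum_block_rpT_le x ha (mem_range.1 hb) hc,
    sum_sub_distrib, sum_range_two_mul, sub_eq_neg_self]
  exact sum_eq_zero fun s _ => by simp

theorem rpT_le_last {j : ℕ} (hj : j ∈ Icc 1 (2 * m * p)) : ρ j ≤ ρ (2 * m * p) := by
  obtain ⟨hm, hp⟩ := pos_of_mem_Icc hj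
  rw [rpT_last hm hp]
  exact (mem_Icc.1 (rpT_mem hj)).2

theorem rpT_last_not_le {j : ℕ} (hj : j ∈ Icc 1 (2 * m * p - 1)) : ¬ρ (2 * m * p) ≤ ρ j := by
  have hj' := Icc_subset_Icc_right (Nat.sub_le _ _) hj
  rw [mem_Icc] at hj
  intro h
  have := rpT_injOn hj' (mem_Icc.2 (by omega)) ((rpT_le_last hj').antisymm h)
  omega

theorem sum_iT_Icc_rpT (x : ℕ → ℤ) {j : ℕ} (hj : j ∈ Icc 1 (2 * m * p - 1)) :
    ∑ k ∈ Icc 1 (ρ j), (x (ι k) - x (ι k - 1))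
      = ∑ i ∈ Icc 1 (2 * m * p), if ρ i ≤ ρ j then x i - x (i - 1) else 0 := by
  have hρ := rpT_mem_pred hj
  rw [← sum_Icc_one_pred_of_last (F := fun i => if ρ i ≤ ρ j then x i - x (i - 1) else 0)
      (by rw [mem_Icc] at hj; omega) (if_neg (rpT_last_not_le hj)),
    ← sum_iT fun k i => if k ≤ ρ j then x i - x (i - 1) else 0, ← sum_filter]
  refine sum_congr ?_ fun _ _ => rfl
  ext k
  simp only [mem_filter, mem_Icc] at hρ ⊢
  omega

/-- The contribution of the pair of blocks `(a, b)` to the rank sum of `b₁`, for a tuple `x`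
extended by `x 0 = x (2mp) = 0`. -/
def rankForm (m : ℕ) (x : ℕ → ℤ) (a b : ℕ) : ℤ :=
  -((-1) ^ (a + b) * ∑ c ∈ range m, x (m * a + c) * x (m * b + rankCut m a b c))

theorem sum_sigmaT_mul_sum_iT (hm : 0 < m) (hp : 0 < p) {x : ℕ → ℤ} (h0 : x 0 = 0)
    (hL : x (2 * m * p) = 0) :
    ∑ j ∈ Icc 1 (2 * m * p - 1),
        σ j * (∑ k ∈ Icc 1 (ρ j), (x (ι k) - x (ι k - 1))) * x (j - 1)
      = ∑ a ∈ range (2 * p), ∑ b ∈ range (2 * p), rankForm m x a b := by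
  have hfull : ∑ i ∈ Icc 1 (2 * m * p),
      (if ρ i ≤ ρ (2 * m * p) then x i - x (i - 1) else 0) = 0 := by
    rw [sum_congr rfl fun i hi => if_pos ?_, sum_Icc_one]
    · simpa [h0, hL] using sum_range_sub x (2 * m * p)
    · rw [rpT_last hm hp]; exact (mem_Icc.1 (rpT_mem hi)).2
  rw [sum_congr rfl fun j hj => by rw [sum_iT_Icc_rpT x hj],
    sum_Icc_one_pred_of_last (by positivity) (by rw [hfull, mul_zero, zero_mul]),
    sum_Icc_blocks]
  refine sum_congr rfl fun a ha => ?_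
  have hterm : ∀ c ∈ range m, σ (m * a + c + 1) * (∑ i ∈ Icc 1 (2 * m * p),
        (if ρ i ≤ ρ (m * a + c + 1) then x i - x (i - 1) else 0)) * x (m * a + c + 1 - 1)
      = ∑ b ∈ range (2 * p),
        -((-1) ^ (a + b) * (x (m * a + c) * x (m * b + rankCut m a b c))) := by
    intro c hc
    rw [sigmaT_block (mem_range.1 ha) (mem_range.1 hc),
      sum_rpT_le x (mem_range.1 ha) (mem_range.1 hc), mul_neg, neg_mul, mul_sum, sum_mul,
      ← sum_neg_distrib, Nat.add_sub_cancel]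
    exact sum_congr rfl fun b _ => by ring
  rw [sum_congr rfl hterm, sum_comm]
  exact sum_congr rfl fun b _ => by rw [rankForm, mul_sum, ← sum_neg_distrib]

theorem sum_iT_inversions (x : ℕ → ℤ) :
    ∑ k ∈ Icc 1 (2 * m * p - 1 - 1), ∑ k' ∈ Icc (k + 1) (2 * m * p - 1),
        ((1 + Int.sign ((ι k : ℤ) - (ι k' : ℤ))) / 2) * ((σ (ι k) - σ (ι k')) / 2) *
          (x (ι k) - x (ι k - 1)) * (x (ι k') - x (ι k' - 1))
      = ∑ j ∈ Icc 1 (2 * m * p), ∑ i ∈ Icc 1 (2 * m * p), if i < j then (x j - x (j - 1)) *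
          (if ρ j < ρ i then (σ j - σ i) / 2 * (x i - x (i - 1)) else 0) else 0 := by
  have hsign : ∀ j i : ℕ, (1 + Int.sign ((j : ℤ) - i)) / 2 = if i < j then 1 else 0 := by
    intro j i
    split_ifs with h
    · rw [Int.sign_eq_one_of_pos (by omega)]; rfl
    · rcases (not_lt.1 h).lt_or_eq with h | rfl
      · rw [Int.sign_eq_neg_one_of_neg (by omega)]; rfl
      · simp
  rw [sum_Icc_succ_pairs, sum_congr rfl fun k _ => sum_iT fun k' i => if k < k' then
      ((1 + Int.sign ((ι k : ℤ) - (i : ℤ))) / 2) * ((σ (ι k) - σ i) / 2) *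
        (x (ι k) - x (ι k - 1)) * (x i - x (i - 1)) else 0,
    sum_iT fun k j => ∑ i ∈ Icc 1 (2 * m * p - 1), if k < ρ i then
      ((1 + Int.sign ((j : ℤ) - (i : ℤ))) / 2) * ((σ j - σ i) / 2) *
        (x j - x (j - 1)) * (x i - x (i - 1)) else 0]
  rcases Nat.eq_zero_or_pos (2 * m * p) with hL | hL
  · simp [hL]
  rw [← sum_Icc_one_pred_of_last hL]
  · refine sum_congr rfl fun j hj => ?_
    rw [← sum_Icc_one_pred_of_last hL (if_neg (by rw [mem_Icc] at hj; omega))]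
    refine sum_congr rfl fun i _ => ?_
    rw [hsign]
    split_ifs <;> ring
  · refine sum_eq_zero fun i hi => ?_
    split_ifs with h1 h2
    · exact absurd h2 (not_lt.2 (rpT_le_last hi))
    · exact mul_zero _
    · rfl

theorem sum_inversions_block (x : ℕ → ℤ) {a b c : ℕ} (hab : Odd (a + b)) (ha : a < 2 * p)
    (hb : b < 2 * p) (hc : c < m) :
    ∑ c' ∈ range m, (if ρ (m * b + c + 1) < ρ (m * a + c' + 1) then
        (σ (m * b + c + 1) - σ (m * a + c' + 1)) / 2 *
          (x (m * a + c' + 1) - x (m * a + c' + 1 - 1)) else 0)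
      = x (m * (a + a % 2)) - x (m * a + (m - 1 - c)) := by
  have hcut : rankCut m b a c = m - 1 - c :=
    if_neg (by rw [add_comm b]; exact Nat.not_even_iff_odd.2 hab)
  have hsigma : (((-1) ^ b - (-1) ^ a) / 2 : ℤ) = (-1) ^ b := by
    rcases Nat.even_or_odd b with h | h
    · rw [h.neg_one_pow, (Nat.odd_add.1 hab |>.2 h).neg_one_pow]; rfl
    · rw [h.neg_one_pow, (Nat.odd_add'.1 hab |>.1 h).neg_one_pow]; rfl
  have hterm : ∀ c' ∈ range m, (if ρ (m * b + c + 1) < ρ (m * a + c' + 1) then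
        (σ (m * b + c + 1) - σ (m * a + c' + 1)) / 2 *
          (x (m * a + c' + 1) - x (m * a + c' + 1 - 1)) else 0)
      = (-1) ^ b * ((x (m * a + (c' + 1)) - x (m * a + c'))
        - if ρ (m * a + c' + 1) ≤ ρ (m * b + c + 1) then
            x (m * a + c' + 1) - x (m * a + c' + 1 - 1) else 0) := by
    intro c' hc'
    rw [sigmaT_block hb hc, sigmaT_block ha (mem_range.1 hc'), hsigma, Nat.add_sub_cancel,
      ← add_assoc (m * a)]
    simp only [← not_le, ite_not]
    split_ifs <;> simp
  rw [sum_congr rfl hterm, ← mul_sum, sum_sub_distrib, sum_block_rpT_le x hb ha hc, hcut,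
    sum_range_sub fun c' => x (m * a + c'), ← mul_add_one, add_zero]
  rcases Nat.even_or_odd a with h | h
  · rw [if_pos h, h.neg_one_pow, (Nat.odd_add'.1 hab |>.2 h).neg_one_pow, Nat.even_iff.1 h,
      add_zero]
    ring
  · rw [if_neg (Nat.not_even_iff_odd.2 h), h.neg_one_pow, (Nat.odd_add.1 hab |>.1 h).neg_one_pow,
      Nat.odd_iff.1 h]
    ring

/-- The contribution of the pair of blocks `a < b` to the inversion sum of `b₁`. -/
def inversionForm (m : ℕ) (x : ℕ → ℤ) (a b : ℕ) : ℤ :=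
  if Even (a + b) then 0 else ∑ c ∈ range m, (x (m * b + c + 1) - x (m * b + c)) *
    (x (m * (a + a % 2)) - x (m * a + (m - 1 - c)))

theorem sum_inversions_eq (x : ℕ → ℤ) :
    ∑ j ∈ Icc 1 (2 * m * p), ∑ i ∈ Icc 1 (2 * m * p), (if i < j then (x j - x (j - 1)) *
        (if ρ j < ρ i then (σ j - σ i) / 2 * (x i - x (i - 1)) else 0) else 0)
      = ∑ b ∈ range (2 * p), ∑ a ∈ range b, inversionForm m x a b := by
  have hblock : ∀ b ∈ range (2 * p), ∀ c ∈ range m, ∀ a ∈ range (2 * p),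
      ∑ c' ∈ range m, (if m * a + c' + 1 < m * b + c + 1 then
        (x (m * b + c + 1) - x (m * b + c)) * (if ρ (m * b + c + 1) < ρ (m * a + c' + 1) then
          (σ (m * b + c + 1) - σ (m * a + c' + 1)) / 2 *
            (x (m * a + c' + 1) - x (m * a + c' + 1 - 1)) else 0) else 0)
      = if a < b then (if Even (a + b) then 0 else (x (m * b + c + 1) - x (m * b + c)) *
          (x (m * (a + a % 2)) - x (m * a + (m - 1 - c)))) else 0 := by
    intro b hb c hc a ha
    rw [mem_range] at hb hc ha
    rcases Nat.even_or_odd (a + b) with hab | hab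
    · rw [if_pos hab, ite_self]
      refine sum_eq_zero fun c' hc' => ?_
      rw [sigmaT_block hb hc, sigmaT_block ha (mem_range.1 hc'),
        neg_one_pow_congr (Nat.even_add.1 hab), sub_self]
      simp
    have hne : a ≠ b := by rintro rfl; exact absurd hab (by simp)
    have hlt : ∀ c' ∈ range m, (m * a + c' + 1 < m * b + c + 1 ↔ a < b) := fun c' hc' => by
      rw [mem_range] at hc'
      have := mul_add_le_mul_add_iff (K := m) (a := b) (b := a) (u := c + 1) (v := c' + 1)
        (mem_Icc.2 (by omega)) (mem_Icc.2 (by omega))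
      omega
    rw [sum_congr rfl fun c' hc' => if_congr (hlt c' hc') rfl rfl,
      if_neg (Nat.not_even_iff_odd.2 hab)]
    split_ifs
    · rw [← mul_sum]
      exact congrArg _ (sum_inversions_block x hab ha hb hc)
    · exact sum_const_zero
  rw [sum_Icc_blocks]
  refine sum_congr rfl fun b hb => ?_
  rw [sum_congr rfl fun c hc => by
    rw [Nat.add_sub_cancel, sum_Icc_blocks, sum_congr rfl (hblock b hb c hc),
      sum_range_ite_lt _ (mem_range.1 hb).le], sum_comm]
  exact sum_congr rfl fun a _ => by rw [inversionForm]; split_ifs <;> simp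

theorem two_mul_dvd_mul_add_iff {k z : ℤ} (hz : |z| < 2 * m) :
    2 * (m : ℤ) ∣ m * k + z ↔ if Even k then z = 0 else z = m ∨ z = -m := by
  rw [abs_lt] at hz
  split_ifs with hk
  · obtain ⟨r, rfl⟩ := hk
    rw [show (m : ℤ) * (r + r) + z = 2 * m * r + z by ring, dvd_add_right (dvd_mul_right _ _)]
    exact ⟨fun h => Int.eq_zero_of_abs_lt_dvd h (abs_lt.2 hz), fun h => h ▸ dvd_zero _⟩
  · obtain ⟨r, rfl⟩ := Int.not_even_iff_odd.1 hk
    rw [show (m : ℤ) * (2 * r + 1) + z = 2 * m * r + (m + z) by ring,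
      dvd_add_right (dvd_mul_right _ _)]
    constructor
    · rintro ⟨s, hs⟩
      have h1 : s < 2 := by nlinarith
      have h2 : -1 < s := by nlinarith
      interval_cases s <;> omega
    · rintro (rfl | rfl)
      · exact ⟨1, by ring⟩
      · simp

theorem two_mul_dvd_mul_add_add_iff {a b z : ℕ} (hz0 : 0 < z) (hz : z < 2 * m) :
    2 * m ∣ m * (a + b) + z ↔ ¬Even (a + b) ∧ z = m := by
  have hdvd := two_mul_dvd_mul_add_iff (m := m) (k := (a + b : ℕ)) (z := z) (by rw [abs_lt]; omega)
  rw [← Int.natCast_dvd_natCast]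
  push_cast at hdvd ⊢
  rw [hdvd]
  simp only [← Nat.cast_add, Int.even_coe_nat]
  split_ifs with h
  · simp only [h, not_true, false_and, iff_false]; omega
  · simp only [h, not_false_iff, true_and]; omega

theorem two_mul_dvd_mul_sub_add_iff {a b : ℕ} {z : ℤ} (hz : |z| < m) :
    2 * (m : ℤ) ∣ m * ((b : ℤ) - a) + z ↔ Even (a + b) ∧ z = 0 := by
  rw [abs_lt] at hz
  have heven : Even ((b : ℤ) - a) ↔ Even (a + b) := by
    rw [Int.even_sub, Int.even_coe_nat, Int.even_coe_nat, Nat.even_add]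
    exact iff_comm
  rw [two_mul_dvd_mul_add_iff (by rw [abs_lt]; omega)]
  simp only [heven]
  split_ifs with h
  · simp only [h, true_and]
  · simp only [h, false_and, iff_false]; omega

theorem epsLO_block {a b c c' : ℕ} (hc : c + 1 < m) (hc' : c' < m) :
    epsLO m (m * a + c + 1) (m * b + c') = if Even (a + b)
      then -((if c' = c + 1 then 1 else 0) + if c' = c then 1 else 0)
      else (if c' = m - 1 - c then 1 else 0) + if c' = m - 2 - c then 1 else 0 := by
  have hndvd : ¬m ∣ m * a + c + 1 := by
    rw [add_assoc, Nat.dvd_add_right (dvd_mul_right _ _)]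
    exact Nat.not_dvd_of_pos_of_lt c.succ_pos hc
  have hsub : ((m * b + c' : ℕ) : ℤ) - (m * a + c + 1 : ℕ)
      = m * ((b : ℤ) - a) + (c' - (c + 1)) := by push_cast; ring
  rw [epsLO, if_neg hndvd, show m * a + c + 1 + (m * b + c') = m * (a + b) + (c + 1 + c') by ring,
    add_assoc (m * (a + b)), hsub, add_assoc (_ * (_ - _))]
  simp only [
    two_mul_dvd_mul_sub_add_iff (m := m) (z := c' - (c + 1)) (by rw [abs_lt]; omega),
    two_mul_dvd_mul_sub_add_iff (m := m) (z := c' - (c + 1) + 1) (by rw [abs_lt]; omega),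
    two_mul_dvd_mul_add_add_iff (m := m) (z := c + 1 + c') (by omega) (by omega),
    two_mul_dvd_mul_add_add_iff (m := m) (z := c + 1 + c' + 1) (by omega) (by omega)]
  by_cases h : Even (a + b)
  · simp only [h, not_true, false_and, or_self, if_true, if_false, true_and]
    split_ifs <;> first | rfl | omega
  · simp only [h, not_false_iff, true_and, false_and, or_self, if_false]
    split_ifs <;> first | rfl | omega

/-- The contribution of the pair of blocks `a < b` to the exponent
`∑ ε_{i,j,m} n_i n_j`. -/
def epsForm (m : ℕ) (x : ℕ → ℤ) (a b : ℕ) : ℤ :=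
  if Even (a + b)
  then -∑ c ∈ range (m - 1), x (m * a + c + 1) * (x (m * b + (c + 1)) + x (m * b + c))
  else ∑ c ∈ range (m - 1),
    x (m * a + c + 1) * (x (m * b + (m - 1 - c)) + x (m * b + (m - 2 - c)))

theorem sum_epsLO_block (x : ℕ → ℤ) (a b : ℕ) :
    ∑ c ∈ range m, ∑ c' ∈ range m, epsLO m (m * a + c) (m * b + c') * x (m * a + c) *
      x (m * b + c') = epsForm m x a b := by
  rcases m with _ | M
  · simp [epsForm]
  rw [sum_range_succ', add_zero, sum_eq_zero (f := fun c' => epsLO _ ((M + 1) * a) _ * _ * _)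
    fun c' _ => by rw [epsLO, if_pos (dvd_mul_right _ _), zero_mul, zero_mul], add_zero, epsForm,
    Nat.add_sub_cancel, ← sum_neg_distrib]
  split_ifs with h <;> refine sum_congr rfl fun c hc => ?_ <;> rw [mem_range] at hc
  · rw [sum_congr rfl fun c' hc' => by
      rw [← add_assoc, epsLO_block (by omega) (mem_range.1 hc'), if_pos h]]
    simp [add_mul, mul_add, sum_add_distrib, hc, Nat.lt_succ_of_lt hc, add_assoc]
  · rw [sum_congr rfl fun c' hc' => by
      rw [← add_assoc, epsLO_block (by omega) (mem_range.1 hc'), if_neg h]]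
    simp [add_mul, mul_add, sum_add_distrib, add_assoc]

theorem epsLO_self_block {a c c' : ℕ} (hcc : c < c') (hc' : c' < m) :
    epsLO m (m * a + c) (m * a + c') = 0 := by
  rcases c with _ | c
  · rw [epsLO, if_pos (by simp)]
  · rw [← add_assoc, epsLO_block (by omega) hc', if_pos (by simp), if_neg (by omega),
      if_neg (by omega)]
    rfl

theorem sum_epsLO_eq (x : ℕ → ℤ) :
    ∑ i ∈ (Icc 1 (2 * m * p - 1)).filter (fun i => ¬m ∣ i), ∑ j ∈ Icc (i + 1) (2 * m * p - 1),
        epsLO m i j * x i * x j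
      = ∑ b ∈ range (2 * p), ∑ a ∈ range b, epsForm m x a b := by
  have hε : ∀ {i}, m ∣ i → ∀ j, epsLO m i j * x i * x j = 0 := fun hi j => by
    rw [epsLO, if_pos hi, zero_mul, zero_mul]
  have hinner : ∀ i, ∑ j ∈ Icc (i + 1) (m * (2 * p) - 1), epsLO m i j * x i * x j
      = ∑ j ∈ range (m * (2 * p)), if i < j then epsLO m i j * x i * x j else 0 := fun i => by
    rw [← sum_filter]
    refine sum_congr ?_ fun _ _ => rfl
    ext j
    simp only [mem_filter, mem_Icc, mem_range]
    omega
  rw [mul_comm 2 m, mul_assoc, sum_filter_of_ne (p := fun i => ¬m ∣ i) fun i _ hne hi =>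
    hne (sum_eq_zero fun j _ => hε hi j),
    sum_Icc_one_pred (sum_eq_zero fun j _ => hε (dvd_zero m) j), sum_range_mul]
  rw [sum_congr rfl fun a _ => sum_congr rfl fun c _ => (hinner _).trans (sum_range_mul _ _ _),
    sum_congr rfl fun a _ => sum_comm, sum_comm]
  refine sum_congr rfl fun b hb => ?_
  rw [← sum_range_ite_lt _ (mem_range.1 hb).le]
  refine sum_congr rfl fun a _ => ?_
  rcases lt_trichotomy a b with hab | rfl | hab
  · rw [if_pos hab, ← sum_epsLO_block]
    refine sum_congr rfl fun c hc => sum_congr rfl fun c' hc' => if_pos ?_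
    have := Nat.mul_le_mul_left m hab
    rw [mem_range, Nat.mul_succ] at *
    omega
  · rw [if_neg (lt_irrefl a)]
    refine sum_eq_zero fun c _ => sum_eq_zero fun c' hc' => ?_
    split_ifs with hlt
    · rw [epsLO_self_block (by omega) (mem_range.1 hc'), zero_mul, zero_mul]
    · rfl
  · rw [if_neg hab.not_gt]
    refine sum_eq_zero fun c hc => sum_eq_zero fun c' hc' => if_neg ?_
    have := Nat.mul_le_mul_left m hab
    rw [mem_range, Nat.mul_succ] at *
    omega

/-- What is left of the pair of blocks `a < b` once its rank form (in both orders), its inversion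
form and its `ε`-form have cancelled; `z a` and `w a` stand for the first and last entries
of block `a`. -/
def pairResidue (z w : ℕ → ℤ) (a b : ℕ) : ℤ :=
  if Even (a + b) then -(z a * z b) - w b * z (a + 1)
  else z a * (z (b + 1) + w b) - (z (b + 1) - z b) * z (a + a % 2)

theorem rankForm_add_sub_eq_pairResidue (hm : 0 < m) (x : ℕ → ℤ) {a b : ℕ} (hab : a < b) :
    rankForm m x a b + rankForm m x b a - inversionForm m x a b - epsForm m x a b
      = pairResidue (fun a => x (m * a)) (fun a => x (m * a + (m - 1))) a b := by
  obtain ⟨M, rfl⟩ := Nat.exists_eq_succ_of_ne_zero hm.ne'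
  rw [Nat.succ_eq_add_one]
  rcases Nat.even_or_odd (a + b) with h | h
  · have hcut : ∀ c, rankCut (M + 1) a b c = c := fun c => by
      rw [rankCut, if_pos h, if_neg (by omega), add_zero]
    have hcut' : ∀ c, rankCut (M + 1) b a c = c + 1 := fun c => by
      rw [rankCut, if_pos (by rwa [add_comm]), if_pos (.inl hab)]
    simp only [rankForm, inversionForm, epsForm, pairResidue, hcut, hcut', if_pos h, add_comm b a,
      h.neg_one_pow, Nat.add_sub_cancel]
    linear_combination -sum_mul_add_sum_mul_shift_sub
      (fun c => x ((M + 1) * a + c)) (fun c => x ((M + 1) * b + c)) M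
  · have hcut : ∀ c, rankCut (M + 1) a b c = M - c := fun c => by
      rw [rankCut, if_neg (Nat.not_even_iff_odd.2 h), Nat.add_sub_cancel]
    have hcut' : ∀ c, rankCut (M + 1) b a c = M - c := fun c => by
      rw [rankCut, if_neg (Nat.not_even_iff_odd.2 (by rwa [add_comm])), Nat.add_sub_cancel]
    have hne : ¬Even (a + b) := Nat.not_even_iff_odd.2 h
    simp only [rankForm, inversionForm, epsForm, pairResidue, hcut, hcut', if_neg hne,
      add_comm b a, h.neg_one_pow, Nat.add_sub_cancel, Nat.reduceSubDiff]
    linear_combination sum_mul_reflect_add_sum_sub (fun c => x ((M + 1) * a + c))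
      (fun c => x ((M + 1) * b + c)) (x ((M + 1) * (a + a % 2))) M

theorem sum_range_pairResidue_pair {z w : ℕ → ℤ} (h0 : z 0 = 0) (k p : ℕ) :
    ∑ a ∈ range (2 * k), (pairResidue z w a (2 * p) + pairResidue z w a (2 * p + 1))
      = z (2 * k) * (z (2 * p) - z (2 * p + 1) - w (2 * p + 1)) := by
  induction k with
  | zero => simp [h0]
  | succ k ih =>
    rw [Nat.mul_succ, sum_range_succ, sum_range_succ, ih]
    simp only [pairResidue, Nat.even_add, even_two, Even.mul_right, Nat.not_even_bit1, iff_false,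
      iff_true, not_true_eq_false, if_true, if_false, Nat.mul_mod_right, Nat.add_mod, Nat.mod_succ,
      zero_add, add_zero]
    ring

theorem sum_pairResidue {z w : ℕ → ℤ} (h0 : z 0 = 0) (p : ℕ) :
    ∑ b ∈ range (2 * p), ∑ a ∈ range b, pairResidue z w a b
      = ∑ s ∈ range p, z (2 * s) ^ 2 := by
  rw [sum_range_two_mul]
  refine sum_congr rfl fun s _ => ?_
  rw [sum_range_succ, ← add_assoc, ← sum_add_distrib, sum_range_pairResidue_pair h0]
  simp only [pairResidue, Nat.even_add, even_two, Even.mul_right, Nat.not_even_bit1, iff_false,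
    not_true_eq_false, if_false, Nat.mul_mod_right, add_zero]
  ring

theorem sum_rankForm_sub_inversionForm (hm : 0 < m) {x : ℕ → ℤ} (h0 : x 0 = 0) (p : ℕ) :
    ∑ a ∈ range (2 * p), ∑ b ∈ range (2 * p), rankForm m x a b
        - ∑ b ∈ range (2 * p), ∑ a ∈ range b, inversionForm m x a b
      = ∑ b ∈ range (2 * p), ∑ a ∈ range b, epsForm m x a b
        + ∑ s ∈ range p, x (m * (2 * s)) ^ 2 + ∑ a ∈ range (2 * p), rankForm m x a a := by
  have hpairs : ∑ b ∈ range (2 * p), ∑ a ∈ range b,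
      (rankForm m x a b + rankForm m x b a - inversionForm m x a b - epsForm m x a b)
        = ∑ s ∈ range p, x (m * (2 * s)) ^ 2 := by
    rw [← sum_pairResidue (z := fun a => x (m * a)) h0]
    exact sum_congr rfl fun b _ => sum_congr rfl fun a ha =>
      rankForm_add_sub_eq_pairResidue hm x (mem_range.1 ha)
  simp only [sum_range_sq_eq_sum_triangle, sum_sub_distrib, sum_add_distrib] at hpairs ⊢
  linear_combination hpairs

theorem rankForm_self (x : ℕ → ℤ) (a : ℕ) :
    rankForm m x a a = if Even a then -∑ c ∈ range m, x (m * a + c) ^ 2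
      else -∑ c ∈ range m, x (m * a + c) * x (m * a + (c + 1)) := by
  rcases Nat.even_or_odd a with h | h
  · simp [rankForm, rankCut, h, Nat.not_odd_iff_even.2 h, pow_two]
  · simp [rankForm, rankCut, Nat.not_even_iff_odd.2 h, h]

theorem two_mul_sum_triangle_sub (hm : 0 < m) (hp : 0 < p) (x : ℕ → ℤ) :
    2 * ∑ j ∈ Icc 1 (2 * m * p - 1), (if σ j = -1 then 0
        else (x j - x (j - 1)) * (x j - x (j - 1) + 1) / 2)
      = ∑ s ∈ range p, (x (m * (2 * s + 1)) ^ 2 - x (m * (2 * s)) ^ 2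
          + x (m * (2 * s + 1)) - x (m * (2 * s))
          + 2 * ∑ c ∈ range m, x (m * (2 * s) + c) ^ 2
          - 2 * ∑ c ∈ range m, x (m * (2 * s) + c) * x (m * (2 * s) + (c + 1))) := by
  rw [sum_Icc_one_pred_of_last (F := fun j => if σ j = -1 then 0 else _) (by positivity)
    (if_pos (sigmaT_last hm hp)), sum_Icc_blocks, sum_range_two_mul, mul_sum]
  refine sum_congr rfl fun s hs => ?_
  rw [mem_range] at hs
  have hodd : ∀ c ∈ range m, σ (m * (2 * s + 1) + c + 1) = -1 := fun c hc => by
    rw [sigmaT_block (by omega) (mem_range.1 hc), Odd.neg_one_pow ⟨s, rfl⟩]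
  rw [sum_congr rfl fun c hc => if_pos (hodd c hc), sum_const_zero, add_zero, mul_sum,
    mul_add_one]
  refine .trans (sum_congr rfl fun c hc => ?_) (sum_triangle_sub (fun c => x (m * (2 * s) + c)) m)
  rw [sigmaT_block (by omega) (mem_range.1 hc), if_neg (by simp), two_mul_triangle]
  rfl

theorem sum_mul_succ_eq (hm : 0 < m) (hp : 0 < p) {x : ℕ → ℤ} (h0 : x 0 = 0)
    (hL : x (2 * m * p) = 0) :
    ∑ i ∈ Icc 1 (2 * m * p - 2), x i * x (i + 1)
      = ∑ a ∈ range (2 * p), ∑ c ∈ range m, x (m * a + c) * x (m * a + (c + 1)) := by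
  have hlength := two_le_length hm hp
  rw [← Nat.sub_sub _ 1 1, sum_Icc_one_pred_of_last (by omega),
    sum_Icc_one_pred (by rw [h0, zero_mul]), mul_comm 2 m, mul_assoc, sum_range_mul]
  · rfl
  · rw [Nat.sub_add_cancel (by omega), hL, mul_zero]

theorem two_mul_sum_boundary_triangle {z : ℕ → ℤ} (h0 : z 0 = 0) (p : ℕ) :
    2 * ∑ a ∈ Icc 1 (2 * p - 1), z a * (z a + 1) / 2
      = ∑ s ∈ range p, (z (2 * s) ^ 2 + z (2 * s) + z (2 * s + 1) ^ 2 + z (2 * s + 1)) := by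
  rw [sum_Icc_one_pred (by rw [h0]; rfl), mul_sum, sum_range_two_mul]
  refine sum_congr rfl fun s _ => ?_
  rw [two_mul_triangle, two_mul_triangle]
  ring

theorem quadratic_part_eq (hm : 0 < m) (hp : 0 < p) {x : ℕ → ℤ} (h0 : x 0 = 0)
    (hL : x (2 * m * p) = 0) :
    ∑ j ∈ Icc 1 (2 * m * p - 1),
        σ j * (∑ k ∈ Icc 1 (ρ j), (x (ι k) - x (ι k - 1))) * x (j - 1)
      - ∑ k ∈ Icc 1 (2 * m * p - 1 - 1), ∑ k' ∈ Icc (k + 1) (2 * m * p - 1),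
          ((1 + Int.sign ((ι k : ℤ) - (ι k' : ℤ))) / 2) * ((σ (ι k) - σ (ι k')) / 2) *
            (x (ι k) - x (ι k - 1)) * (x (ι k') - x (ι k' - 1))
      + ∑ j ∈ Icc 1 (2 * m * p - 1), (if σ j = -1 then 0
          else (x j - x (j - 1)) * (x j - x (j - 1) + 1) / 2)
      = ∑ i ∈ (Icc 1 (2 * m * p - 1)).filter (fun i => ¬m ∣ i),
          ∑ j ∈ Icc (i + 1) (2 * m * p - 1), epsLO m i j * x i * x j
        + ∑ a ∈ Icc 1 (2 * p - 1), x (m * a) * (x (m * a) + 1) / 2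
        - ∑ i ∈ Icc 1 (2 * m * p - 2), x i * x (i + 1)
        - ∑ s ∈ range p, x (m * (2 * s)) := by
  have hpairs := sum_rankForm_sub_inversionForm hm h0 p
  have hboundary := two_mul_sum_boundary_triangle (z := fun a => x (m * a)) (by simpa using h0) p
  have htau := two_mul_sum_triangle_sub hm hp x
  rw [sum_sigmaT_mul_sum_iT hm hp h0 hL, sum_iT_inversions, sum_inversions_eq, sum_epsLO_eq,
    sum_mul_succ_eq hm hp h0 hL, sum_range_two_mul (fun a => ∑ c ∈ range m, _)]
  rw [sum_range_two_mul (fun a => rankForm m x a a)] at hpairs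
  simp only [rankForm_self, even_two_mul, if_true, Nat.not_even_two_mul_add_one, if_false] at hpairs
  simp only [sum_add_distrib, sum_sub_distrib, sum_neg_distrib, ← mul_sum] at *
  linarith

/-! ### The linear part of the exponent -/

theorem sum_half_one_add_sigmaT_mul_sub (hm : 0 < m) (hp : 0 < p) (x : ℕ → ℤ) :
    ∑ j ∈ Icc 1 (2 * m * p - 1), (1 + σ j) / 2 * (x j - x (j - 1))
      = -∑ a ∈ range (2 * p), (-1) ^ a * x (m * a) := by
  rw [sum_Icc_one_pred_of_last (by positivity) (by rw [sigmaT_last hm hp]; simp), sum_Icc_blocks,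
    sum_range_two_mul, sum_range_two_mul, ← sum_neg_distrib]
  refine sum_congr rfl fun s hs => ?_
  rw [mem_range] at hs
  have heven := sum_range_sub (fun c => x (m * (2 * s) + c)) m
  have hodd : ∑ c ∈ range m, (1 + σ (m * (2 * s + 1) + c + 1)) / 2 *
      (x (m * (2 * s + 1) + c + 1) - x (m * (2 * s + 1) + c + 1 - 1)) = 0 :=
    sum_eq_zero fun c hc => by rw [sigmaT_block (by omega) (mem_range.1 hc)]; simp [pow_succ]
  rw [hodd, sum_congr rfl fun c hc => by rw [sigmaT_block (by omega) (mem_range.1 hc)]]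
  simp only [pow_succ, even_two_mul, Even.neg_pow, one_pow, Nat.add_sub_cancel, ← add_assoc,
    add_zero] at heven ⊢
  rw [show ((1 + 1) / 2 : ℤ) = 1 by rfl, mul_add_one]
  simp only [one_mul]
  rw [heven]
  ring

theorem sum_half_sigmaT_succ_sub_mul (hm : 0 < m) (hp : 0 < p) {x : ℕ → ℤ} (h0 : x 0 = 0) :
    ∑ j ∈ Icc 1 (2 * m * p - 1 - 1), (σ (j + 1) - σ j) / 2 * x j
      = (1 + σ (2 * m * p - 1)) / 2 * x (2 * m * p - 1)
        + ∑ a ∈ range (2 * p), (-1) ^ a * x (m * a) := by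
  have habel := sum_mul_sub_add_sum_sub_mul (fun j => (1 + σ j) / 2) x (2 * m * p - 1 - 1)
  rw [Nat.sub_add_cancel (by have := two_le_length hm hp; omega),
    sum_half_one_add_sigmaT_mul_sub hm hp, h0, mul_zero, sub_zero] at habel
  have hdiv : ∀ j, (σ (j + 1) - σ j) / 2 = (1 + σ (j + 1)) / 2 - (1 + σ j) / 2 :=
    fun _ => neg_one_pow_sub_ediv_two _ _
  simp only [hdiv]
  linear_combination habel

theorem sigmaT_reflect {j : ℕ} (hj : j < 2 * m * p) : σ (2 * m * p - j) = -σ (j + 1) := by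
  obtain ⟨a, ha, c, hc, hjac⟩ := exists_block (j := j + 1) (mem_Icc.2 ⟨j.succ_pos, hj⟩)
  have hlast := last_block (m := m) (p := p) (by omega) (by omega)
  have hmul : m * (2 * p - 1) = m * (2 * p - 1 - a) + m * a := by rw [← mul_add]; congr 1; omega
  rw [hjac, show 2 * m * p - j = m * (2 * p - 1 - a) + (m - 1 - c) + 1 by omega,
    sigmaT_block (by omega) (by omega), sigmaT_block ha hc, ← neg_one_mul ((-1) ^ a), ← pow_succ']
  exact neg_one_pow_congr (by simp only [Nat.even_iff]; omega)

theorem sum_sigmaT (hm : 0 < m) (hp : 0 < p) : ∑ j ∈ Icc 1 (2 * m * p - 1), σ j = 1 := by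
  have hfull : ∑ j ∈ Icc 1 (2 * m * p), σ j = 0 := by
    rw [sum_Icc_blocks, sum_congr rfl fun a ha => sum_congr rfl fun c hc =>
      sigmaT_block (mem_range.1 ha) (mem_range.1 hc), sum_range_two_mul]
    simp [pow_succ]
  have hpos : 2 * m * p - 1 + 1 = 2 * m * p := by
    have := two_le_length hm hp; omega
  rw [← hpos, sum_Icc_succ_top (by omega), hpos, sigmaT_last hm hp] at hfull
  linarith

theorem half_sigmaT_iT_add_reflect {k : ℕ} (hk : k ∈ Icc 1 (2 * m * p - 1)) :
    (σ (ι k) + σ (ι (2 * m * p - k))) / 2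
      = -((1 + (-1) ^ ((k + 1 - 1) / p)) / 2) - -((1 + (-1) ^ ((k - 1) / p)) / 2) := by
  have hp : 0 < p := (pos_of_mem_Icc (Icc_subset_Icc_right (Nat.sub_le _ _) hk)).2
  have hk' := mem_Icc.1 hk
  have hlt : k / p < 2 * m := by rw [Nat.div_lt_iff_lt_mul hp]; omega
  have hreflect : (-1 : ℤ) ^ ((2 * m * p - k - 1) / p) = -(-1) ^ (k / p) := by
    rw [show 2 * m * p - k - 1 = p * (2 * m) - (k + 1) by rw [mul_comm p]; omega,
      Nat.mul_sub_div _ _ _ (by rw [mul_comm p]; omega), ← neg_one_mul ((-1) ^ (k / p)),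
      ← pow_succ']
    exact neg_one_pow_congr (by simp only [Nat.even_iff]; omega)
  rw [sigmaT_iT hk, sigmaT_iT (mem_Icc.2 (by omega)), hreflect, ← sub_eq_add_neg,
    neg_one_pow_sub_ediv_two, Nat.add_sub_cancel]
  ring

theorem sum_Icc_rpT_half_sigmaT_iT {j : ℕ} (hj : j ∈ Icc 1 (2 * m * p - 1)) :
    ∑ k ∈ Icc (ρ j) (2 * m * p - 1), (σ (ι k) + σ (ι (2 * m * p - k))) / 2 = (1 + σ j) / 2 := by
  have hj' := Icc_subset_Icc_right (Nat.sub_le _ _) hj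
  obtain ⟨hm, hp⟩ := pos_of_mem_Icc hj'
  have hρ := mem_Icc.1 (rpT_mem_pred hj)
  have hodd : (-1 : ℤ) ^ ((2 * m * p - 1) / p) = -1 := by
    rw [mul_comm _ p, Nat.mul_sub_div 0 _ _ (by positivity), Nat.zero_div]
    exact Odd.neg_one_pow ⟨m - 1, by omega⟩
  rw [sum_congr rfl fun k hk => half_sigmaT_iT_add_reflect (mem_Icc.2 ?_),
    sum_Icc_sub hρ.2 fun k => -((1 + (-1) ^ ((k - 1) / p)) / 2 : ℤ), Nat.add_sub_cancel, hodd,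
    ← sigmaT_eq_pow_rpT_div hj']
  · simp
  · rw [mem_Icc] at hk; omega

theorem aT_eq (hm : 0 < m) (hp : 0 < p) (n : ℕ → ℕ) :
    aT (4 * m * p - 1) (4 * m * p - 2 * p - 1) n
      = ∑ a ∈ range (2 * p), (-1) ^ a * (n (m * a) : ℤ)
        - (1 + σ (2 * m * p - 1)) / 2 * n (2 * m * p - 1) - 1 := by
  have hpos := two_le_length hm hp
  have hmid : ∑ j ∈ Icc 1 (2 * m * p - 1 - 1),
      (σ (j + 1) + σ (2 * m * p - j)) / 2 * (n j : ℤ) = 0 := sum_eq_zero fun j hj => by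
    rw [mem_Icc] at hj
    rw [sigmaT_reflect (by omega), add_neg_cancel, Int.zero_ediv, zero_mul]
  rw [aT, half_length, Nat.sub_add_cancel (by omega), hmid, sum_sigmaT hm hp,
    sum_congr rfl fun j hj => by rw [sum_Icc_rpT_half_sigmaT_iT hj],
    sum_half_one_add_sigmaT_mul_sub hm hp fun i => (n i : ℤ), add_comm (σ _)]
  ring

theorem le_length_pred (hm : 0 < m) : p ≤ 2 * m * p - 1 := by
  have := Nat.mul_le_mul_right p (show 2 ≤ 2 * m by omega)
  omega

theorem sigmaT_iT_of_le {k : ℕ} (hm : 0 < m) (hk : k ∈ Icc 1 p) : σ (ι k) = 1 := by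
  rw [mem_Icc] at hk
  have := le_length_pred (p := p) hm
  rw [sigmaT_iT (mem_Icc.2 (by omega)), Nat.div_eq_of_lt (by omega), pow_zero]

theorem half_one_add_sigmaT_iT_mul_eq_zero {k : ℕ} (hk : k ∈ Icc 1 (2 * m * p - 1))
    (hle : 2 * m * p - p ≤ k) {x : ℕ → ℤ} (h0 : x 0 = 0) :
    (1 + σ (ι k)) / 2 * x (ι k - 1) = 0 := by
  have hk' := Icc_subset_Icc_right (Nat.sub_le _ _) hk
  obtain ⟨hm, hp⟩ := pos_of_mem_Icc hk'
  rw [mem_Icc] at hk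
  rcases hle.eq_or_lt with rfl | hlt
  · have hone : ρ 1 = 2 * m * p - p := by
      have h := rpT_block (m := m) (p := p) (a := 0) (c := 0) (by omega) hm
      rw [mul_zero, zero_add, zero_add, if_pos Even.zero, Nat.zero_div, Nat.sub_zero, Nat.sub_zero,
        Nat.mul_sub, mul_right_comm 2 p m] at h
      have := Nat.mul_le_mul_right p (show 2 ≤ 2 * m by omega)
      omega
    rw [← hone, iT_rpT (mem_Icc.2 ⟨le_rfl, by omega⟩), Nat.sub_self, h0, mul_zero]
  · have hdiv : (k - 1) / p = 2 * m - 1 := by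
      refine Nat.div_eq_of_lt_le ?_ ?_
      · rw [Nat.sub_mul, one_mul]; omega
      · rw [Nat.sub_add_cancel (by omega)]; omega
    rw [sigmaT_iT (mem_Icc.2 hk), hdiv, Odd.neg_one_pow ⟨m - 1, by omega⟩]
    simp

theorem b2T_eq (hm : 0 < m) (hp : 0 < p) {n : ℕ → ℕ} (h0 : n 0 = 0) :
    b2T (4 * m * p - 1) (4 * m * p - 2 * p - 1) n
      = ∑ k ∈ Icc (p + 1) (2 * m * p - 1), (1 + σ (ι k)) / 2 * (n (ι k - 1) : ℤ) := by
  have hvanish : ∀ k ∈ Icc (p + 1) (2 * m * p - 1), 2 * m * p - p ≤ k →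
      (1 + σ (ι k)) / 2 * (n (ι k - 1) : ℤ) = 0 := fun k hk hle =>
    half_one_add_sigmaT_iT_mul_eq_zero (x := fun i => (n i : ℤ))
      (Icc_subset_Icc_left (by omega) hk) hle (by simp [h0])
  rw [b2T]
  rcases Nat.eq_or_lt_of_le (show 1 ≤ m from hm) with rfl | hm2
  · rw [if_neg (by omega), Icc_eq_empty (by omega), sum_empty, neg_zero,
      sum_eq_zero fun k hk => hvanish k hk (by rw [mem_Icc] at hk; omega)]
  · have hlarge := Nat.mul_le_mul_right p (show 2 ≤ m from hm2)
    simp only [mul_assoc] at hvanish ⊢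
    rw [if_pos (by omega)]
    refine sum_subset (Icc_subset_Icc (by omega) (by omega)) fun k hk hk' =>
      hvanish k hk ?_
    rw [mem_Icc] at hk hk'
    omega

theorem sum_iT_Icc_one (hm : 0 < m) (x : ℕ → ℤ) :
    ∑ k ∈ Icc 1 p, x (ι k) = ∑ s ∈ range p, x (m * (2 * s + 1)) := by
  rw [sum_Icc_one, ← sum_range_reflect]
  refine sum_congr rfl fun s hs => ?_
  rw [mem_range] at hs
  have hsucc : m * (2 * s) + (m - 1) + 1 = m * (2 * s + 1) := by rw [mul_add_one]; omega
  have hρ : ρ (m * (2 * s + 1)) = p - 1 - s + 1 := by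
    rw [← hsucc, rpT_block (by omega) (by omega), if_pos (even_two_mul s), Nat.sub_self]
    omega
  have hlt : m * (2 * s + 1) < 2 * m * p := by
    rw [mul_comm 2 m, mul_assoc]; exact Nat.mul_lt_mul_of_pos_left (by omega) hm
  have hpos : 0 < m * (2 * s + 1) := by positivity
  rw [← hρ, iT_rpT (mem_Icc.2 (by omega))]

theorem sum_sigmaT_shift (hm : 0 < m) (hp : 0 < p) (x : ℕ → ℤ) :
    ∑ j ∈ Icc 1 (2 * m * p - 1), ((1 + σ j) / 2 * x j - (1 - σ j) / 2 * x (j - 1))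
      = ∑ s ∈ range p, (∑ c ∈ range m, (x (m * (2 * s) + c) - x (m * (2 * s + 1) + c))
          + x (m * (2 * s + 1)) - x (m * (2 * s))) + x (2 * m * p - 1) := by
  have hblock : ∀ a < 2 * p,
      ∑ c ∈ range m, ((1 + σ (m * a + c + 1)) / 2 * x (m * a + c + 1)
        - (1 - σ (m * a + c + 1)) / 2 * x (m * a + c + 1 - 1))
      = ∑ c ∈ range m, ((1 + (-1) ^ a) / 2 * x (m * a + c + 1)
        - (1 - (-1) ^ a) / 2 * x (m * a + c)) := fun a ha =>
    sum_congr rfl fun c hc => by rw [sigmaT_block ha (mem_range.1 hc), Nat.add_sub_cancel]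
  have hpair : ∀ s ∈ range p,
      ∑ c ∈ range m, (x (m * (2 * s) + c + 1) - x (m * (2 * s + 1) + c))
      = ∑ c ∈ range m, (x (m * (2 * s) + c) - x (m * (2 * s + 1) + c))
          + x (m * (2 * s + 1)) - x (m * (2 * s)) := fun s _ => by
    have htel := sum_range_sub (fun c => x (m * (2 * s) + c)) m
    simp only [sum_sub_distrib, add_zero, ← add_assoc, mul_add_one] at htel ⊢
    linarith
  have hlast := sum_Icc_succ_top (a := 1) (b := 2 * m * p - 1) (by omega) fun j =>
    (1 + σ j) / 2 * x j - (1 - σ j) / 2 * x (j - 1)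
  rw [Nat.sub_add_cancel (Nat.one_le_of_lt (two_le_length hm hp)), sigmaT_last hm hp,
    sum_Icc_blocks, sum_range_two_mul] at hlast
  rw [← sum_congr rfl hpair, ← sub_eq_iff_eq_add]
  convert hlast.symm using 1
  · norm_num [sub_eq_add_neg]
  · refine sum_congr rfl fun s hs => ?_
    rw [mem_range] at hs
    rw [hblock _ (by omega), hblock _ (by omega), ← sum_add_distrib]
    norm_num [pow_succ, sub_eq_add_neg]

theorem gamLO_block {a c : ℕ} (hc : c < m) :
    gamLO m (m * a + c) = (-1) ^ a - if Even a ∧ c = 0 then 2 else 0 := by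
  rcases Nat.even_or_odd' a with ⟨s, rfl | rfl⟩
  · rw [gamLO, ← mul_assoc, mul_comm m 2, Nat.mul_add_mod, Nat.mod_eq_of_lt (by omega)]
    by_cases hc0 : c = 0
    · rw [if_neg (by omega), if_pos (by simp [hc0])]
      simp
    · rw [if_pos (by omega), if_neg (by simp [hc0])]
      simp
  · rw [gamLO, show m * (2 * s + 1) + c = 2 * m * s + (m + c) by ring, Nat.mul_add_mod,
      Nat.mod_eq_of_lt (by omega), if_neg (by omega), if_neg (by simp),
      (odd_two_mul_add_one s).neg_one_pow, sub_zero]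

theorem sum_gamLO (hm : 0 < m) (hp : 0 < p) {x : ℕ → ℤ} (h0 : x 0 = 0) :
    ∑ i ∈ Icc 1 (2 * m * p - 2), gamLO m i * x i
      = ∑ s ∈ range p, (∑ c ∈ range m, (x (m * (2 * s) + c) - x (m * (2 * s + 1) + c))
          - 2 * x (m * (2 * s))) + x (2 * m * p - 1) := by
  have hpos := two_le_length hm hp
  have hlast : gamLO m (2 * m * p - 1) = -1 := by
    rw [← last_block hm hp, Nat.add_sub_cancel, gamLO_block (by omega),
      Odd.neg_one_pow ⟨p - 1, by omega⟩, if_neg (by simp only [Nat.even_iff]; omega), sub_zero]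
  have hblocks : ∑ i ∈ range (2 * m * p), gamLO m i * x i
      = ∑ s ∈ range p, (∑ c ∈ range m, (x (m * (2 * s) + c) - x (m * (2 * s + 1) + c))
          - 2 * x (m * (2 * s))) := by
    rw [mul_comm 2 m, mul_assoc, sum_range_mul, sum_range_two_mul]
    refine sum_congr rfl fun s _ => ?_
    rw [sum_congr rfl fun c hc => by rw [gamLO_block (mem_range.1 hc)], add_comm,
      sum_congr rfl fun c hc => by rw [gamLO_block (mem_range.1 hc)]]
    simp only [pow_succ, even_two_mul, Even.neg_pow, one_pow, mul_neg, mul_one, one_mul, neg_mul,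
      Nat.not_even_bit1, false_and, true_and, if_false, sub_zero, sub_mul, ite_mul, zero_mul,
      sum_neg_distrib, sum_sub_distrib, sum_ite_eq', mem_range, hm, if_true, add_zero]
    ring
  have hsplit := sum_range_succ (fun i => gamLO m i * x i) (2 * m * p - 1)
  rw [Nat.sub_add_cancel (by omega), hblocks, hlast] at hsplit
  rw [show 2 * m * p - 2 = 2 * m * p - 1 - 1 by omega, sum_Icc_one_pred (by rw [h0, mul_zero]),
    hsplit]
  ring

theorem linear_part_eq (hm : 0 < m) (hp : 0 < p) {n : ℕ → ℕ} (h0 : n 0 = 0) :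
    ∑ k ∈ Icc 1 p, (1 - σ (ι k)) / 2 * (n (ι k - 1) : ℤ)
        - ∑ k ∈ Icc (p + 1) (2 * m * p - 1), (n (ι k - 1) : ℤ)
        + ∑ k ∈ Icc (p + 1) (2 * m * p - 1), (1 + σ (ι k)) / 2 * (n (ι k) : ℤ)
        + b2T (4 * m * p - 1) (4 * m * p - 2 * p - 1) n
      = ∑ i ∈ Icc 1 (2 * m * p - 2), gamLO m i * (n i : ℤ)
        + ∑ s ∈ range p, (n (m * (2 * s)) : ℤ) := by
  set F : ℕ → ℤ := fun j => (1 + σ j) / 2 * (n j : ℤ) - (1 - σ j) / 2 * (n (j - 1) : ℤ) with hF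
  have hhead : ∑ k ∈ Icc 1 p, F (ι k) = ∑ s ∈ range p, (n (m * (2 * s + 1)) : ℤ) := by
    rw [← sum_iT_Icc_one hm fun i => (n i : ℤ)]
    exact sum_congr rfl fun k hk => by simp [hF, sigmaT_iT_of_le hm hk]
  have hsplit : ∑ k ∈ Icc 1 p, F (ι k) + ∑ k ∈ Icc (p + 1) (2 * m * p - 1), F (ι k)
      = ∑ j ∈ Icc 1 (2 * m * p - 1), F j := by
    rw [← sum_iT fun _ j => F j]
    simpa only [← Icc_add_one_left_eq_Ioc, zero_add] using
      sum_Ioc_consecutive (fun k => F (ι k)) (Nat.zero_le p) (le_length_pred hm)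
  have hzero : ∑ k ∈ Icc 1 p, (1 - σ (ι k)) / 2 * (n (ι k - 1) : ℤ) = 0 :=
    sum_eq_zero fun k hk => by simp [sigmaT_iT_of_le hm hk]
  have htail : -∑ k ∈ Icc (p + 1) (2 * m * p - 1), (n (ι k - 1) : ℤ)
        + ∑ k ∈ Icc (p + 1) (2 * m * p - 1), (1 + σ (ι k)) / 2 * (n (ι k) : ℤ)
        + ∑ k ∈ Icc (p + 1) (2 * m * p - 1), (1 + σ (ι k)) / 2 * (n (ι k - 1) : ℤ)
      = ∑ k ∈ Icc (p + 1) (2 * m * p - 1), F (ι k) := by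
    rw [← sum_neg_distrib, ← sum_add_distrib, ← sum_add_distrib]
    refine sum_congr rfl fun k _ => ?_
    rcases sigmaT_eq_one_or (4 * m * p - 1) (4 * m * p - 2 * p - 1) (ι k) with h | h <;>
      simp [hF, h]
  rw [sum_sigmaT_shift hm hp fun i => (n i : ℤ), hhead] at hsplit
  rw [hzero, b2T_eq hm hp h0, sum_gamLO hm hp (x := fun i => (n i : ℤ)) (by simp [h0])]
  simp only [sum_add_distrib, sum_sub_distrib, ← mul_sum] at hsplit ⊢
  linarith

theorem exponent_eq (hm : 0 < m) (hp : 0 < p) (N : ℕ) {n : ℕ → ℕ} (h0 : n 0 = 0)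
    (hL : n (2 * m * p) = 0) :
    aT (4 * m * p - 1) (4 * m * p - 2 * p - 1) n * (N : ℤ)
      + b1T (4 * m * p - 1) (4 * m * p - 2 * p - 1) n
      + b2T (4 * m * p - 1) (4 * m * p - 2 * p - 1) n
      + kapT (4 * m * p - 1) (4 * m * p - 2 * p - 1) N n
      + ∑ j ∈ Icc 1 (2 * m * p - 1), (if σ j = -1 then 0
          else ((n j : ℤ) - n (j - 1)) * ((n j : ℤ) - n (j - 1) + 1) / 2)
    = 1 - N - N * n (2 * m * p - 1)
      + ∑ i ∈ (Icc 1 (2 * m * p - 1)).filter (fun i => ¬ m ∣ i),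
          ∑ j ∈ Icc (i + 1) (2 * m * p - 1), epsLO m i j * (n i : ℤ) * (n j : ℤ)
      + ∑ i ∈ Icc 1 (2 * p - 1), ((-1 : ℤ) ^ i * (N : ℤ) * (n (m * i) : ℤ)
          + (n (m * i) : ℤ) * ((n (m * i) : ℤ) + 1) / 2)
      + ∑ i ∈ Icc 1 (2 * m * p - 2), (-((n i : ℤ) * (n (i + 1) : ℤ)) + gamLO m i * (n i : ℤ)) := by
  have hhalf : (4 * m * p - 1 - (4 * m * p - 2 * p - 1)) / 2 = p := by
    have := Nat.mul_le_mul_right p (show 4 ≤ 4 * m by omega)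
    omega
  have hboundary : ∑ a ∈ range (2 * p), (-1) ^ a * (n (m * a) : ℤ)
      = ∑ a ∈ Icc 1 (2 * p - 1), (-1) ^ a * (n (m * a) : ℤ) :=
    (sum_Icc_one_pred (by simp [h0])).symm
  have ha := aT_eq hm hp n
  have hdiff := sum_half_sigmaT_succ_sub_mul hm hp (x := fun i => (n i : ℤ)) (by simp [h0])
  have hlin := linear_part_eq hm hp h0
  have hquad := quadratic_part_eq hm hp (x := fun i => (n i : ℤ)) (by simp [h0]) (by simp [hL])
  rw [hboundary] at ha hdiff
  have hN : ∑ i ∈ Icc 1 (2 * p - 1), (-1 : ℤ) ^ i * (N : ℤ) * (n (m * i) : ℤ)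
      = N * ∑ a ∈ Icc 1 (2 * p - 1), (-1) ^ a * (n (m * a) : ℤ) := by
    rw [mul_sum]
    exact sum_congr rfl fun _ _ => by ring
  have hκ : kapT (4 * m * p - 1) (4 * m * p - 2 * p - 1) N n
      = -N * (1 - (1 + σ (2 * m * p - 1)) / 2) * n (2 * m * p - 1) := by
    rw [kapT, half_length]
    rcases sigmaT_eq_one_or _ _ (2 * m * p - 1) with hσ | hσ <;> rw [hσ] <;> simp
  have hσ : 1 + σ (2 * m * p - 1) = 2 * ((1 + σ (2 * m * p - 1)) / 2) := by
    rcases sigmaT_eq_one_or _ _ (2 * m * p - 1) with hσ | hσ <;> rw [hσ] <;> rfl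
  rw [b1T, half_length, hhalf, hdiff, ha, hκ, sum_add_distrib, sum_add_distrib,
    sum_neg_distrib, hN]
  linear_combination hlin + hquad - (n (2 * m * p - 1) : ℤ) * hσ

theorem neg_one_pow_mul_neg_one_pow_sum (hm : 0 < m) (hp : 0 < p) {n : ℕ → ℕ} (h0 : n 0 = 0)
    (hmono : ∀ j ∈ Icc 1 (2 * m * p - 1), n (j - 1) ≤ n j) :
    (-1 : ℂ) ^ n (2 * m * p - 1) *
        (-1) ^ (∑ j ∈ Icc 1 (2 * m * p - 1), if σ j = -1 then n j - n (j - 1) else 0)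
      = (-1) ^ ∑ i ∈ Icc 1 (2 * p - 1), n (m * i) := by
  have htotal := sum_range_sub (fun i => (n i : ℤ)) (2 * m * p - 1)
  have htel := sum_half_one_add_sigmaT_mul_sub hm hp fun i => (n i : ℤ)
  simp only [h0, Nat.cast_zero, sub_zero] at htotal
  have hneg : ((∑ j ∈ Icc 1 (2 * m * p - 1), if σ j = -1 then n j - n (j - 1) else 0 : ℕ) : ℤ)
      = n (2 * m * p - 1) + ∑ a ∈ range (2 * p), (-1) ^ a * (n (m * a) : ℤ) := by
    rw [← htotal, ← sub_neg_eq_add, ← htel, Nat.cast_sum, sum_Icc_one, sum_Icc_one,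
      ← sum_sub_distrib]
    refine sum_congr rfl fun c hc => ?_
    have hle : n c ≤ n (c + 1) := hmono (c + 1) (mem_Icc.2 (by rw [mem_range] at hc; omega))
    rcases sigmaT_eq_one_or _ _ (c + 1) with hσ | hσ <;> rw [hσ] <;> simp [hle]
  rw [← pow_add]
  refine neg_one_pow_congr ?_
  rw [← Int.even_coe_nat, ← Int.even_coe_nat, ← Int.even_sub, Nat.cast_add, hneg, Nat.cast_sum,
    sum_Icc_one_pred (by simp [h0]), ← add_assoc, add_sub_assoc, ← sum_sub_distrib]
  refine (Even.add_self _).add (even_sum _ fun a _ => ?_)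
  rw [← sub_one_mul]
  refine Even.mul_right ?_ _
  rcases neg_one_pow_eq_or ℤ a with h | h <;> rw [h] <;> decide

end DoubleTwist

/-! ### The `q`-hypergeometric factors -/

theorem qPoch_succ (a q : ℂ) (n : ℕ) : qPoch a q (n + 1) = qPoch a q n * (1 - a * q ^ n) :=
  prod_range_succ _ _

theorem qPoch_zero (a q : ℂ) : qPoch a q 0 = 1 := prod_range_zero _

theorem qPoch_ne_zero_of_le {a q : ℂ} {k n : ℕ} (h : k ≤ n) (hn : qPoch a q n ≠ 0) :
    qPoch a q k ≠ 0 :=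
  prod_ne_zero_iff.2 fun i hi =>
    prod_ne_zero_iff.1 hn i (mem_range.2 ((mem_range.1 hi).trans_le h))

theorem gaussPoly_eq_zero_of_lt : ∀ {n k : ℕ}, n < k → gaussPoly n k = 0
  | _, 0, h => absurd h (Nat.not_lt_zero _)
  | 0, _ + 1, _ => by rw [gaussPoly]
  | n + 1, k + 1, h => by
    rw [gaussPoly, gaussPoly_eq_zero_of_lt (Nat.lt_of_succ_lt_succ h),
      gaussPoly_eq_zero_of_lt (Nat.lt_of_succ_lt h), mul_zero, add_zero]

theorem gbin_zero_right (q : ℂ) (n : ℕ) : gbin q n 0 = 1 := by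
  cases n <;> simp [gbin, gaussPoly]

theorem gbin_eq_zero_of_lt (q : ℂ) {n k : ℕ} (h : n < k) : gbin q n k = 0 := by
  rw [gbin, gaussPoly_eq_zero_of_lt h, map_zero]

theorem gbin_succ_succ (q : ℂ) (n k : ℕ) :
    gbin q (n + 1) (k + 1) = gbin q n k + q ^ (k + 1) * gbin q n (k + 1) := by
  simp [gbin, gaussPoly]

theorem gbin_add_mul_qPoch (q : ℂ) : ∀ a k : ℕ,
    gbin q (a + k) k * (qPoch q q k * qPoch q q a) = qPoch q q (a + k)
  | a, 0 => by rw [add_zero, gbin_zero_right, qPoch_zero, one_mul, one_mul]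
  | 0, k + 1 => by
    have ih := gbin_add_mul_qPoch q 0 k
    rw [zero_add, qPoch_zero, mul_one] at ih ⊢
    rw [gbin_succ_succ, gbin_eq_zero_of_lt q k.lt_succ_self, qPoch_succ]
    linear_combination (1 - q * q ^ k) * ih
  | a + 1, k + 1 => by
    have ih1 := gbin_add_mul_qPoch q (a + 1) k
    have ih2 := gbin_add_mul_qPoch q a (k + 1)
    rw [show a + 1 + k = a + k + 1 by ring, qPoch_succ q q a] at ih1
    rw [← add_assoc, qPoch_succ q q k] at ih2
    rw [show a + 1 + (k + 1) = a + k + 1 + 1 by ring, gbin_succ_succ, qPoch_succ q q (a + k + 1),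
      qPoch_succ q q a, qPoch_succ q q k]
    linear_combination (1 - q * q ^ k) * ih1 + q ^ (k + 1) * (1 - q * q ^ a) * ih2

theorem prod_gbin_mul_prod_qPoch (q : ℂ) {n : ℕ → ℕ} (h0 : n 0 = 0) {K : ℕ}
    (hmono : ∀ i ≤ K, n i ≤ n (i + 1)) :
    (∏ i ∈ Icc 1 K, gbin q (n (i + 1)) (n i)) *
      ∏ j ∈ Icc 1 (K + 1), qPoch q q (n j - n (j - 1)) = qPoch q q (n (K + 1)) := by
  induction K with
  | zero => simp [h0]
  | succ K ih =>
    have hstep := gbin_add_mul_qPoch q (n (K + 1 + 1) - n (K + 1)) (n (K + 1))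
    rw [Nat.sub_add_cancel (hmono _ le_rfl), ← ih fun i hi => hmono i (hi.trans K.le_succ)] at hstep
    rw [prod_Icc_succ_top (by omega), prod_Icc_succ_top (b := K + 1) (by omega), Nat.add_sub_cancel]
    linear_combination hstep

theorem neg_one_sub_zpow_mul_zpow {K : Type*} [Field K] {q : K} (hq : q ≠ 0) (b c : ℤ) :
    -(1 - q ^ (b - c)) * q ^ (-b) = q ^ (-c) * (1 - q ^ (c - b)) := by
  rw [neg_sub, sub_mul, one_mul, mul_one_sub, ← zpow_add₀ hq, ← zpow_add₀ hq]
  congr 2 <;> ring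

theorem qPoch_reflect {q : ℂ} (hq : q ≠ 0) {N n : ℕ} (hn : n < N) :
    qPoch (q ^ (1 - (N : ℤ))) q n * (-1) ^ n * q ^ (-((n : ℤ) * ((n : ℤ) + 1) / 2)) *
      qPoch q q (N - n - 1) = q ^ (-((N : ℤ) * n)) * qPoch q q (N - 1) := by
  induction n with
  | zero => simp [qPoch_zero]
  | succ n ih =>
    have ih := ih (n.lt_succ_self.trans hn)
    have htri : -(((n + 1 : ℕ) : ℤ) * (((n + 1 : ℕ) : ℤ) + 1) / 2)
        = -((n : ℤ) * ((n : ℤ) + 1) / 2) + -((n + 1 : ℕ) : ℤ) := by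
      have hsucc := two_mul_triangle ((n + 1 : ℕ) : ℤ)
      have hn := two_mul_triangle (n : ℤ)
      push_cast at hsucc ⊢
      linarith
    have hstep := neg_one_sub_zpow_mul_zpow hq ((n + 1 : ℕ) : ℤ) N
    rw [show ((n + 1 : ℕ) : ℤ) - N = 1 - N + n by push_cast; ring, zpow_add₀ hq,
      zpow_natCast] at hstep
    rw [show N - n - 1 = N - (n + 1) - 1 + 1 by omega, qPoch_succ, ← pow_succ',
      ← zpow_natCast q (N - (n + 1) - 1 + 1),
      show ((N - (n + 1) - 1 + 1 : ℕ) : ℤ) = N - (n + 1 : ℕ) by omega]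
      at ih
    rw [qPoch_succ, htri, zpow_add₀ hq, pow_succ,
      show -((N : ℤ) * (n + 1 : ℕ)) = -(N * n) + -N by push_cast; ring, zpow_add₀ hq]
    linear_combination q ^ (-(N : ℤ)) * ih +
      qPoch (q ^ (1 - (N : ℤ))) q n * (-1) ^ n * q ^ (-((n : ℤ) * ((n : ℤ) + 1) / 2)) *
        qPoch q q (N - (n + 1) - 1) * hstep

theorem tauT_eq (l t : ℕ) (q : ℂ) (n : ℕ → ℕ) (j : ℕ) :
    tauT l t q n j = (-1) ^ (if sigmaT l t j = -1 then n j - n (j - 1) else 0) *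
      q ^ (if sigmaT l t j = -1 then 0
        else ((n j : ℤ) - n (j - 1)) * ((n j : ℤ) - n (j - 1) + 1) / 2) := by
  unfold tauT; split_ifs <;> simp

theorem XT_eq {m p N : ℕ} (hm : 0 < m) (hp : 0 < p) {q : ℂ} (hq : q ≠ 0)
    (hqN : qPoch q q (N - 1) ≠ 0) {n : ℕ → ℕ} (h0 : n 0 = 0) (hN : n (2 * m * p - 1) < N)
    (hmono : ∀ i < 2 * m * p - 1, n i ≤ n (i + 1)) :
    XT (4 * m * p - 1) (4 * m * p - 2 * p - 1) N q n
      = q ^ (kapT (4 * m * p - 1) (4 * m * p - 2 * p - 1) N n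
          + ∑ j ∈ Icc 1 (2 * m * p - 1),
            (if sigmaT (4 * m * p - 1) (4 * m * p - 2 * p - 1) j = -1 then 0
              else ((n j : ℤ) - n (j - 1)) * ((n j : ℤ) - n (j - 1) + 1) / 2)
          + N * n (2 * m * p - 1)) *
        (qPoch (q ^ (1 - (N : ℤ))) q (n (2 * m * p - 1)) * (-1) ^ n (2 * m * p - 1) *
          q ^ (-((n (2 * m * p - 1) : ℤ) * ((n (2 * m * p - 1) : ℤ) + 1) / 2))) *
        (-1) ^ (∑ i ∈ Icc 1 (2 * p - 1), n (m * i)) *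
        ∏ i ∈ Icc 1 (2 * m * p - 2), gbin q (n (i + 1)) (n i) := by
  have hlength := two_le_length hm hp
  have hgauss := prod_gbin_mul_prod_qPoch q h0 (K := 2 * m * p - 2) fun i hi =>
    hmono i (by omega)
  rw [show 2 * m * p - 2 + 1 = 2 * m * p - 1 by omega] at hgauss
  have hsign := neg_one_pow_mul_neg_one_pow_sum hm hp h0 fun j hj => by
    rw [mem_Icc] at hj
    simpa [Nat.sub_add_cancel hj.1] using hmono (j - 1) (by omega)
  have htail : qPoch q q (N - n (2 * m * p - 1) - 1) ≠ 0 := qPoch_ne_zero_of_le (by omega) hqN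
  have hdenom : ∏ j ∈ Icc 1 (2 * m * p - 1), qPoch q q (n j - n (j - 1)) ≠ 0 :=
    right_ne_zero_of_mul (hgauss.trans_ne (qPoch_ne_zero_of_le (by omega) hqN))
  rw [XT, half_length, prod_div_distrib, ← hgauss, ← hsign, zpow_add₀ hq, zpow_add₀ hq,
    eq_div_iff htail |>.2 (qPoch_reflect hq hN), zpow_neg]
  simp only [tauT_eq, prod_mul_distrib, prod_zpow_eq_zpow_sum hq, prod_pow_eq_pow_sum]
  have hqNn : q ^ ((N : ℤ) * n (2 * m * p - 1)) ≠ 0 := zpow_ne_zero _ hq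
  field_simp

theorem takata_term_eq {m p N : ℕ} (hm : 0 < m) (hp : 0 < p) {q : ℂ} (hq : q ≠ 0)
    (hqN : qPoch q q (N - 1) ≠ 0) {n : ℕ → ℕ} (h0 : n 0 = 0) (hL : n (2 * m * p) = 0)
    (hN : n (2 * m * p - 1) < N) (hmono : ∀ i < 2 * m * p - 1, n i ≤ n (i + 1)) :
    q ^ (aT (4 * m * p - 1) (4 * m * p - 2 * p - 1) n * (N : ℤ)
          + b1T (4 * m * p - 1) (4 * m * p - 2 * p - 1) n
          + b2T (4 * m * p - 1) (4 * m * p - 2 * p - 1) n) *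
        XT (4 * m * p - 1) (4 * m * p - 2 * p - 1) N q n
    = q ^ (1 - (N : ℤ)) *
      (qPoch (q ^ (1 - (N : ℤ))) q (n (2 * m * p - 1)) *
          (-1 : ℂ) ^ (n (2 * m * p - 1)) *
          q ^ (-(((n (2 * m * p - 1) : ℤ) * ((n (2 * m * p - 1) : ℤ) + 1)) / 2)) *
          (∏ i ∈ (Icc 1 (2 * m * p - 1)).filter (fun i => ¬ m ∣ i),
            ∏ j ∈ Icc (i + 1) (2 * m * p - 1),
              q ^ (epsLO m i j * (n i : ℤ) * (n j : ℤ))) *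
          (∏ i ∈ Icc 1 (2 * p - 1),
            (-1 : ℂ) ^ (n (m * i)) *
              q ^ ((-1 : ℤ) ^ i * (N : ℤ) * (n (m * i) : ℤ)
                    + ((n (m * i) : ℤ) * ((n (m * i) : ℤ) + 1)) / 2)) *
          (∏ i ∈ Icc 1 (2 * m * p - 2),
            q ^ (-((n i : ℤ) * (n (i + 1) : ℤ)) + gamLO m i * (n i : ℤ)) *
              gbin q (n (i + 1)) (n i))) := by
  have hregroup {e x c E B C : ℤ} (h : e + x = c + E + B + C) (P S G : ℂ) :
      q ^ e * (q ^ x * P * S * G) = q ^ c * (P * q ^ E * (S * q ^ B) * (q ^ C * G)) := by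
    have hpow : q ^ e * q ^ x = q ^ c * q ^ E * q ^ B * q ^ C := by
      simp only [← zpow_add₀ hq, h]
    linear_combination P * S * G * hpow
  simp only [prod_mul_distrib, prod_zpow_eq_zpow_sum hq, prod_pow_eq_pow_sum]
  rw [XT_eq hm hp hq hqN h0 hN hmono]
  exact hregroup (by linear_combination exponent_eq hm hp N h0 hL) _ _ _

theorem extTup_le {P N : ℕ} {f : Fin P → Fin N} (hf : Monotone f) {i : ℕ} (hi : i < P) :
    extTup P N f i ≤ extTup P N f (i + 1) := by
  unfold extTup
  rw [dif_pos (⟨by omega, by omega⟩ : 1 ≤ i + 1 ∧ i + 1 ≤ P)]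
  split_ifs
  · exact hf (Fin.mk_le_mk.2 (by omega))
  · exact Nat.zero_le _

theorem extTup_lt {P N : ℕ} (hN : 0 < N) (f : Fin P → Fin N) (i : ℕ) : extTup P N f i < N := by
  unfold extTup
  split_ifs
  · exact Fin.is_lt _
  · exact hN

/-- Theorem 1.1 (Lovejoy–Osburn): the colored Jones polynomial of the double twist
knot `K_(-m,-p)`, i.e. Takata's sum for `l = 4mp-1`, `t = 4mp-2p-1`, equals the stated
multiple `q`-hypergeometric sum. -/
theorem colored_jones_double_twist_neg_neg
    (m p N : ℕ) (hm : 0 < m) (hp : 0 < p) (hN : 0 < N)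
    (q : ℂ) (hq : q ≠ 0) (hqN : qPoch q q (N - 1) ≠ 0) :
    (∑ f ∈ Finset.univ.filter
        (fun f : Fin (2 * m * p - 1) → Fin N => ∀ i j, i ≤ j → f i ≤ f j),
      let n := extTup (2 * m * p - 1) N f
      q ^ (aT (4 * m * p - 1) (4 * m * p - 2 * p - 1) n * (N : ℤ)
            + b1T (4 * m * p - 1) (4 * m * p - 2 * p - 1) n
            + b2T (4 * m * p - 1) (4 * m * p - 2 * p - 1) n) *
        XT (4 * m * p - 1) (4 * m * p - 2 * p - 1) N q n)
    = q ^ (1 - (N : ℤ)) *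
      ∑ f ∈ Finset.univ.filter
          (fun f : Fin (2 * m * p - 1) → Fin N => ∀ i j, i ≤ j → f i ≤ f j),
        let n := extTup (2 * m * p - 1) N f
        qPoch (q ^ (1 - (N : ℤ))) q (n (2 * m * p - 1)) *
          (-1 : ℂ) ^ (n (2 * m * p - 1)) *
          q ^ (-(((n (2 * m * p - 1) : ℤ) * ((n (2 * m * p - 1) : ℤ) + 1)) / 2)) *
          (∏ i ∈ (Icc 1 (2 * m * p - 1)).filter (fun i => ¬ m ∣ i),
            ∏ j ∈ Icc (i + 1) (2 * m * p - 1),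
              q ^ (epsLO m i j * (n i : ℤ) * (n j : ℤ))) *
          (∏ i ∈ Icc 1 (2 * p - 1),
            (-1 : ℂ) ^ (n (m * i)) *
              q ^ ((-1 : ℤ) ^ i * (N : ℤ) * (n (m * i) : ℤ)
                    + ((n (m * i) : ℤ) * ((n (m * i) : ℤ) + 1)) / 2)) *
          (∏ i ∈ Icc 1 (2 * m * p - 2),
            q ^ (-((n i : ℤ) * (n (i + 1) : ℤ)) + gamLO m i * (n i : ℤ)) *
              gbin q (n (i + 1)) (n i)) := by
  dsimp only
  rw [mul_sum]
  refine sum_congr rfl fun f hf => ?_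
  have hlength := two_le_length hm hp
  refine takata_term_eq hm hp hq hqN ?_ ?_ (extTup_lt hN f _) fun i hi =>
    extTup_le (fun i j h => (mem_filter.1 hf).2 i j h) hi
  · simp [extTup]
  · rw [extTup, dif_neg (by omega)]

end
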